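/- The set 𝒫𝒵 of all pointed proper CAT(0) metric spaces is path-connected as a subspace of (𝒫ℳ, d_pGH), and every nonempty open subset of 𝒫𝒵 (in the subspace topology) has infinite covering dimension. -/

import Mathlib

/-- A metric space is *geodesic* if any two points `x, y` are joined by a
geodesic, i.e. a map `γ : [0,1] → X` with `γ 0 = x`, `γ 1 = y` and
`dist (γ s) (γ t) = |s - t| * dist x y`. -/
def IsGeodesicSpace (X : Type*) [MetricSpace X] : Prop :=
  ∀ x y : X, ∃ γ : ℝ → X, γ 0 = x ∧ γ 1 = y ∧
    ∀ s ∈ Set.Icc (0 : ℝ) 1, ∀ t ∈ Set.Icc (0 : ℝ) 1,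
      dist (γ s) (γ t) = |s - t| * dist x y

/-- A metric space is *CAT(0)* if it is geodesic and every geodesic triangle
satisfies the Euclidean comparison inequality; equivalently (the formulation
used here), the comparison (CN) inequality holds along every geodesic. -/
def IsCAT0Space (X : Type*) [MetricSpace X] : Prop :=
  IsGeodesicSpace X ∧
  ∀ x y z : X, ∀ γ : ℝ → X, γ 0 = x → γ 1 = y →
    (∀ s ∈ Set.Icc (0 : ℝ) 1, ∀ t ∈ Set.Icc (0 : ℝ) 1,
      dist (γ s) (γ t) = |s - t| * dist x y) →
    ∀ t ∈ Set.Icc (0 : ℝ) 1,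
      dist z (γ t) ^ 2 ≤
        (1 - t) * dist z x ^ 2 + t * dist z y ^ 2 - t * (1 - t) * dist x y ^ 2

/-- `IsAdmissiblePair a b t h` says that `h` is a `(t; a, b)`-admissible metric
on the disjoint union `X ⊕ Y`: it is a metric restricting to the given
distances on `X²` and `Y²`, with `h(a,b) < t`, and the closed ball of radius
`t⁻¹` around `a` (resp. `b`) is contained in the open `t`-neighbourhood of `Y`
(resp. `X`). -/
def IsAdmissiblePair {X Y : Type*} [MetricSpace X] [MetricSpace Y]
    (a : X) (b : Y) (t : ℝ) (h : X ⊕ Y → X ⊕ Y → ℝ) : Prop :=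
  (∀ p q, h p q = 0 ↔ p = q) ∧
  (∀ p q, h p q = h q p) ∧
  (∀ p q r, h p r ≤ h p q + h q r) ∧
  (∀ x y : X, h (Sum.inl x) (Sum.inl y) = dist x y) ∧
  (∀ x y : Y, h (Sum.inr x) (Sum.inr y) = dist x y) ∧
  h (Sum.inl a) (Sum.inr b) < t ∧
  (∀ p, h (Sum.inl a) p ≤ t⁻¹ → ∃ y : Y, h p (Sum.inr y) < t) ∧
  (∀ p, h (Sum.inr b) p ≤ t⁻¹ → ∃ x : X, h p (Sum.inl x) < t)

/-- The pointed Gromov–Hausdorff distance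
`d_pGH = min { d'_pGH, 1/2 }`, where `d'_pGH` is the infimum of all `t > 0`
for which a `(t; a, b)`-admissible metric on `X ⊕ Y` exists.  (Taking `sInf`
of the set together with `1/2` implements the truncation at `1/2`.) -/
noncomputable def pghDistOf (X Y : Type*) [MetricSpace X] [MetricSpace Y]
    (a : X) (b : Y) : ℝ :=
  sInf (insert (1 / 2 : ℝ)
    {t : ℝ | 0 < t ∧ ∃ h : X ⊕ Y → X ⊕ Y → ℝ, IsAdmissiblePair a b t h})

/-- A pointed proper metric space: a (proper) metric space together with a
base point. -/
structure PointedProperMetricSpace : Type 1 where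
  carrier : Type
  [met : MetricSpace carrier]
  [prop : ProperSpace carrier]
  pt : carrier

attribute [instance] PointedProperMetricSpace.met PointedProperMetricSpace.prop

/-- The pointed Gromov–Hausdorff distance between pointed proper metric
spaces. -/
noncomputable def pghDist (p q : PointedProperMetricSpace) : ℝ :=
  pghDistOf p.carrier q.carrier p.pt q.pt

/-- The topology induced by the pointed Gromov–Hausdorff distance (generated
by its open balls). -/
instance : TopologicalSpace PointedProperMetricSpace :=
  TopologicalSpace.generateFrom
    {s | ∃ (p : PointedProperMetricSpace) (ε : ℝ), 0 < ε ∧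
      s = {q | pghDist p q < ε}}

/-- Two pointed metric spaces are identified in `𝒫ℳ` when there is a
base-point-preserving isometric bijection between them. -/
instance pointedIsometrySetoid : Setoid PointedProperMetricSpace where
  r p q := ∃ e : p.carrier ≃ᵢ q.carrier, e p.pt = q.pt
  iseqv := by
    refine ⟨fun p => ⟨IsometryEquiv.refl _, rfl⟩, ?_, ?_⟩
    · rintro p q ⟨e, he⟩
      exact ⟨e.symm, by rw [← he, IsometryEquiv.symm_apply_apply]⟩
    · rintro p q r ⟨e, he⟩ ⟨f, hf⟩
      exact ⟨e.trans f, by rw [IsometryEquiv.trans_apply, he, hf]⟩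

/-- `𝒫ℳ`: the space of pointed isometry classes of pointed proper metric
spaces, with the (quotient of the) pointed Gromov–Hausdorff topology. -/
def PGHSpace : Type 1 := Quotient pointedIsometrySetoid

instance : TopologicalSpace PGHSpace :=
  instTopologicalSpaceQuotient

/-- The pointed isometry class of a pointed proper metric space. -/
def PGHSpace.mk (X : Type) [MetricSpace X] [ProperSpace X] (a : X) : PGHSpace :=
  Quotient.mk pointedIsometrySetoid ⟨X, a⟩

/-- `𝒫𝒵`: the subset of `𝒫ℳ` consisting of pointed proper CAT(0)
spaces. -/
def PGHCat0 : Set PGHSpace :=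
  {x | IsCAT0Space (Quotient.out (α := PointedProperMetricSpace) x).carrier}

/-- A topological space has covering dimension at most `n` if every open cover
admits an open refinement that still covers the space and in which every point
lies in at most `n + 1` members of the refinement. -/
def CovDimLE (X : Type*) [TopologicalSpace X] (n : ℕ) : Prop :=
  ∀ U : Set (Set X), (∀ u ∈ U, IsOpen u) → ⋃₀ U = Set.univ →
    ∃ V : Set (Set X), (∀ w ∈ V, IsOpen w) ∧ ⋃₀ V = Set.univ ∧
      (∀ w ∈ V, ∃ u ∈ U, w ⊆ u) ∧
      ∀ x : X, {w ∈ V | x ∈ w}.encard ≤ (n : ℕ∞) + 1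

section Helpers

open Set MeasureTheory Topology


lemma aux_lagrange (N : ℕ) (ε : ℝ) (hε : 0 < ε) : ∃ w v : Fin (N+1) → ℝ,
    (∀ i, 0 < v i ∧ v i ≤ ε) ∧
    ∀ p : Polynomial ℝ, p.natDegree ≤ N → p.eval 1 = ∑ i, w i * p.eval (v i) := by
  let v : Fin (N+1) → ℝ := fun i => ε * ((i : ℝ) + 1) / (N + 1)
  have hinj : Set.InjOn v (Finset.univ : Finset (Fin (N+1))) := by
    intro i _ j _ h
    simp only [v] at h
    have hN : (N : ℝ) + 1 ≠ 0 := by positivity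
    field_simp at h
    have : (i : ℝ) = j := by linarith
    exact Fin.ext (by exact_mod_cast this)
  refine ⟨fun i => (Lagrange.basis Finset.univ v i).eval 1, v, ?_, ?_⟩
  · intro i
    refine ⟨by positivity, ?_⟩
    simp only [v]
    rw [div_le_iff₀ (by positivity)]
    have : (i : ℝ) + 1 ≤ N + 1 := by
      have := i.2
      exact_mod_cast this
    gcongr
  · intro p hp
    have h := Lagrange.eq_interpolate (f := p) hinj (by
      refine lt_of_le_of_lt Polynomial.degree_le_natDegree ?_
      simp only [Finset.card_univ, Fintype.card_fin]
      exact_mod_cast Nat.lt_succ_of_le hp)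
    conv_lhs => rw [h]
    rw [Lagrange.interpolate_apply, Polynomial.eval_finsetSum]
    refine Finset.sum_congr rfl fun i _ => ?_
    simp [mul_comm]

lemma aux_det_poly {N : ℕ} (A : (Fin N → ℝ) →L[ℝ] (Fin N → ℝ)) :
    ∃ p : Polynomial ℝ, p.natDegree ≤ N ∧
      ∀ t : ℝ, (ContinuousLinearMap.id ℝ (Fin N → ℝ) + t • A).det = p.eval t := by
  let M := LinearMap.toMatrix' (A : (Fin N → ℝ) →ₗ[ℝ] (Fin N → ℝ))
  refine ⟨Matrix.det ((Polynomial.X : Polynomial ℝ) • M.map Polynomial.C + (1 : Matrix (Fin N) (Fin N) ℝ).map Polynomial.C), ?_, ?_⟩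
  · simpa using Polynomial.natDegree_det_X_add_C_le M 1
  · intro t
    rw [ContinuousLinearMap.det, ← LinearMap.det_toMatrix', ← Polynomial.coe_evalRingHom,
      RingHom.map_det]
    congr 1
    ext i j
    by_cases h : i = j <;>
    simp [M, LinearMap.toMatrix'_apply, h, add_comm, mul_comm t]

lemma aux_degree {N : ℕ} (G : (Fin N → ℝ) → (Fin N → ℝ)) (hG : ContDiff ℝ 1 G)
    (hK : ∀ x ∈ Icc (0 : Fin N → ℝ) 1, G x ∈ Icc (0 : Fin N → ℝ) 1)
    (h0 : ∀ x ∈ Icc (0 : Fin N → ℝ) 1, ∀ i, x i = 0 → G x i = 0)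
    (h1 : ∀ x ∈ Icc (0 : Fin N → ℝ) 1, ∀ i, x i = 1 → G x i = 1) :
    ∫ x in Icc (0 : Fin N → ℝ) 1, (fderiv ℝ G x).det = 1 := by
  set K := Icc (0 : Fin N → ℝ) 1 with hKdef
  have hKc : IsCompact K := isCompact_Icc
  have hKconv : Convex ℝ K := convex_Icc _ _
  let u : (Fin N → ℝ) → (Fin N → ℝ) := fun x => G x - x
  let A : (Fin N → ℝ) → ((Fin N → ℝ) →L[ℝ] (Fin N → ℝ)) :=
    fun x => fderiv ℝ G x - ContinuousLinearMap.id ℝ _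
  have hA : Continuous A := (hG.continuous_fderiv one_ne_zero).sub continuous_const
  have hu : ∀ x, HasFDerivAt u (A x) x := fun x =>
    ((hG.differentiable one_ne_zero) x).hasFDerivAt.sub (hasFDerivAt_id x)
  have hdetc : Continuous fun B : (Fin N → ℝ) →L[ℝ] (Fin N → ℝ) => B.det :=
    ContinuousLinearMap.continuous_det
  -- Lipschitz
  obtain ⟨L, hL⟩ : ∃ L : NNReal, LipschitzOnWith L u K := by
    obtain ⟨C, hC⟩ := hKc.exists_bound_of_continuousOn hA.continuousOn
    refine ⟨C.toNNReal, hKconv.lipschitzOnWith_of_nnnorm_hasFDerivWithin_le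
      (fun x hx => (hu x).hasFDerivWithinAt) fun x hx => ?_⟩
    rw [← NNReal.coe_le_coe, coe_nnnorm]
    exact (hC x hx).trans (Real.le_coe_toNNReal C)
  -- positivity
  have hpos : ∀ᶠ t in 𝓝 (0 : ℝ), ∀ x ∈ K,
      0 < (ContinuousLinearMap.id ℝ (Fin N → ℝ) + t • A x).det := by
    refine hKc.eventually_forall_of_forall_eventually fun x hx => ?_
    have hc : Continuous fun z : ℝ × (Fin N → ℝ) =>
        (ContinuousLinearMap.id ℝ (Fin N → ℝ) + z.1 • A z.2).det :=
      hdetc.comp (continuous_const.add (continuous_fst.smul (hA.comp continuous_snd)))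
    have : (0 : ℝ) < (ContinuousLinearMap.id ℝ (Fin N → ℝ) + (0:ℝ) • A x).det := by
      simp [ContinuousLinearMap.det]
    exact (hc.tendsto (0, x)).eventually (lt_mem_nhds this)
  obtain ⟨ε₀, hε₀, hpos'⟩ := Metric.eventually_nhds_iff.1 hpos
  -- clip
  let cl : (Fin N → ℝ) → (Fin N → ℝ) := fun x i => max 0 (min 1 (x i))
  have hclK : ∀ x, cl x ∈ K := fun x =>
    ⟨fun i => le_max_left _ _, fun i => max_le zero_le_one (min_le_left _ _)⟩
  have hcl_lip : ∀ x y, dist (cl x) (cl y) ≤ dist x y := by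
    intro x y
    refine (dist_pi_le_iff dist_nonneg).2 fun i => ?_
    refine le_trans ?_ (dist_le_pi_dist x y i)
    have h1 := abs_max_sub_max_le_abs (min 1 (x i)) (min 1 (y i)) 0
    have h2 := abs_min_sub_min_le_max (1:ℝ) (x i) 1 (y i)
    simp only [sub_self, abs_zero] at h2
    rw [max_eq_right (abs_nonneg _)] at h2
    simp only [cl, Real.dist_eq]
    rw [max_comm 0, max_comm 0]
    exact h1.trans h2
  have hcl_id : ∀ x ∈ K, cl x = x := by
    intro x hx
    ext i
    have a := hx.1 i
    have b := hx.2 i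
    simp only [Pi.zero_apply, Pi.one_apply] at a b
    simp [cl, a, b]
  have hclu : ∀ x y, dist (u (cl x)) (u (cl y)) ≤ L * dist x y := fun x y =>
    (hL.dist_le_mul _ (hclK x) _ (hclK y)).trans (by gcongr; exact hcl_lip x y)
  -- main claim
  have key : ∀ t : ℝ, 0 < t → t ≤ min (ε₀ / 2) (1 / (L + 1) / 2) →
      ∫ x in K, (ContinuousLinearMap.id ℝ (Fin N → ℝ) + t • A x).det = 1 := by
    intro t ht0 ht
    have htL : t * L < 1 := by
      have h2 : t ≤ 1 / (L + 1) / 2 := ht.trans (min_le_right _ _)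
      have : t * (L + 1) ≤ 1 / 2 := by
        calc t * (L + 1) ≤ 1 / (L + 1) / 2 * (L + 1) := by gcongr
          _ = 1 / 2 := by field_simp
      linarith
    have ht1 : t ≤ 1 := by
      have h2 : t ≤ 1 / (L + 1) / 2 := ht.trans (min_le_right _ _)
      have : (1:ℝ) / (L + 1) ≤ 1 := by
        rw [div_le_one (by positivity)]
        have := L.2
        simp
      linarith
    have htε : t < ε₀ := by
      have := ht.trans (min_le_left _ _)
      linarith
    let ψ : (Fin N → ℝ) → (Fin N → ℝ) := fun x => x + t • u x
    have hψ : ∀ x ∈ K, HasFDerivWithinAt ψ (ContinuousLinearMap.id ℝ (Fin N → ℝ) + t • A x) K x :=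
      fun x _ => ((hasFDerivAt_id x).add ((hu x).const_smul t)).hasFDerivWithinAt
    have hinj : InjOn ψ K := by
      intro x hx y hy hxy
      have e : x - y = t • (u y - u x) := by
        have : x + t • u x = y + t • u y := hxy
        rw [smul_sub, sub_eq_sub_iff_add_eq_add, this, add_comm]
      have : dist x y ≤ t * L * dist x y := by
        calc dist x y = t * dist (u y) (u x) := by
              rw [dist_eq_norm, e, norm_smul, Real.norm_of_nonneg ht0.le, dist_eq_norm]
          _ ≤ t * (L * dist y x) := by gcongr; exact hL.dist_le_mul _ hy _ hx
          _ = _ := by rw [dist_comm]; ring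
      have h0 : dist x y = 0 := by
        by_contra h
        have : 0 < dist x y := lt_of_le_of_ne dist_nonneg (Ne.symm h)
        nlinarith
      exact dist_eq_zero.1 h0
    have himg : ψ '' K = K := by
      apply Subset.antisymm
      · rintro _ ⟨x, hx, rfl⟩
        have : ψ x = (1 - t) • x + t • G x := by
          simp only [ψ, u, smul_sub, sub_smul, one_smul]; abel
        rw [this]
        exact hKconv hx (hK x hx) (by linarith) ht0.le (by ring)
      · intro y hy
        have hcontr : ContractingWith (t.toNNReal * L : NNReal) (fun x => y - t • u (cl x)) := by
          refine ⟨by rw [← NNReal.coe_lt_coe]; simpa [ht0.le] using htL, LipschitzWith.of_dist_le_mul ?_⟩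
          intro a b
          rw [dist_sub_left, dist_smul₀, Real.norm_of_nonneg ht0.le]
          calc t * dist (u (cl a)) (u (cl b)) ≤ t * (L * dist a b) := by gcongr; exact hclu a b
            _ = _ := by simp [mul_assoc, ht0.le]
        obtain ⟨x, hx⟩ : ∃ x, y - t • u (cl x) = x :=
          ⟨_, hcontr.fixedPoint_isFixedPt⟩
        have hxi : ∀ i, x i = y i - t * u (cl x) i := fun i => by
          conv_lhs => rw [← hx]
          simp
        have hxK : x ∈ K := by
          refine ⟨fun i => ?_, fun i => ?_⟩
          · by_contra hlt
            simp only [Pi.zero_apply, not_le] at hlt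
            have hc : cl x i = 0 := by
              simp only [cl]; exact max_eq_left ((min_le_right _ _).trans hlt.le)
            have hz : u (cl x) i = 0 := by
              simp [u, h0 _ (hclK x) i hc, hc]
            have := hxi i
            rw [hz] at this
            have := hy.1 i
            simp only [Pi.zero_apply] at this
            linarith
          · by_contra hlt
            simp only [Pi.one_apply, not_le] at hlt
            have hc : cl x i = 1 := by
              simp only [cl]; rw [min_eq_left hlt.le]; simp
            have hz : u (cl x) i = 0 := by
              simp [u, h1 _ (hclK x) i hc, hc]
            have := hxi i
            rw [hz] at this
            have := hy.2 i
            simp only [Pi.one_apply] at this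
            linarith
        refine ⟨x, hxK, ?_⟩
        rw [hcl_id x hxK] at hx
        simp only [ψ]
        rw [← hx]
        nth_rewrite 2 [hx]
        abel
    have hcv := integral_image_eq_integral_abs_det_fderiv_smul volume hKc.measurableSet hψ hinj
      (fun _ => (1:ℝ))
    rw [himg] at hcv
    have hv : ∫ _ in K, (1:ℝ) = 1 := by
      simp [hKdef, Measure.real, Real.volume_Icc_pi]
    rw [hv] at hcv
    rw [hcv]
    refine setIntegral_congr_fun hKc.measurableSet fun x hx => ?_
    simp only [smul_eq_mul, mul_one]
    rw [abs_of_pos]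
    refine hpos' ?_ x hx
    simpa [abs_of_pos ht0] using htε
  obtain ⟨w, v, hv, hw⟩ := aux_lagrange N (min (ε₀ / 2) (1 / (L + 1) / 2)) (by positivity)
  have hsum : ∑ i, w i = 1 := by
    have := hw (Polynomial.C 1) (by simp)
    simpa using this.symm
  have hpt : ∀ x, (fderiv ℝ G x).det =
      ∑ i, w i * (ContinuousLinearMap.id ℝ (Fin N → ℝ) + v i • A x).det := by
    intro x
    obtain ⟨p, hp, hpe⟩ := aux_det_poly (A x)
    have := hw p hp
    simp only [hpe]
    rw [← this, ← hpe]
    congr 1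
    simp [A]
  simp_rw [hpt]
  rw [integral_finsetSum]
  · simp_rw [integral_const_mul]
    rw [← hsum]
    refine Finset.sum_congr rfl fun i _ => ?_
    rw [key _ (hv i).1 (hv i).2, mul_one]
  · intro i _
    refine Integrable.const_mul ?_ _
    refine Continuous.integrableOn_Icc (f := fun x => (ContinuousLinearMap.id ℝ (Fin N → ℝ) + v i • A x).det) ?_
    exact hdetc.comp (continuous_const.add (hA.const_smul (v i)))
lemma aux_det_zero {N : ℕ} {ι : Type*} (B : (Fin N → ℝ) →L[ℝ] (Fin N → ℝ)) (S : Finset ι)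
    (hS : S.card ≤ N) (hne : S.Nonempty) (l : ι → ((Fin N → ℝ) →L[ℝ] ℝ)) (y : ι → (Fin N → ℝ))
    (hl : ∑ w ∈ S, l w = 0) (hB : ∀ v, B v = ∑ w ∈ S, l w v • y w) : B.det = 0 := by
  classical
  obtain ⟨w0, hw0⟩ := hne
  by_contra hdet
  have hsurj : LinearMap.range (B : (Fin N → ℝ) →ₗ[ℝ] (Fin N → ℝ)) = ⊤ := by
    have : IsUnit (LinearMap.det (B : (Fin N → ℝ) →ₗ[ℝ] (Fin N → ℝ))) := isUnit_iff_ne_zero.2 hdet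
    rw [LinearMap.range_eq_top]
    intro z
    obtain ⟨x, hx⟩ := (LinearMap.equivOfIsUnitDet this).surjective z
    exact ⟨x, by simpa using hx⟩
  have hle : LinearMap.range (B : (Fin N → ℝ) →ₗ[ℝ] (Fin N → ℝ)) ≤
      Submodule.span ℝ (((S.erase w0).image fun w => y w - y w0 : Finset (Fin N → ℝ)) : Set (Fin N → ℝ)) := by
    rintro _ ⟨v, rfl⟩
    have h1 : B v = ∑ w ∈ S, l w v • (y w - y w0) := by
      have h2 : ∑ w ∈ S, l w v = 0 := by
        have := congrArg (fun f : (Fin N → ℝ) →L[ℝ] ℝ => f v) hl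
        simpa using this
      simp_rw [smul_sub, Finset.sum_sub_distrib, ← Finset.sum_smul, h2, zero_smul, sub_zero]
      exact hB v
    change B v ∈ _
    rw [h1]
    refine Submodule.sum_mem _ fun w hw => ?_
    by_cases h : w = w0
    · simp [h]
    · refine Submodule.smul_mem _ _ (Submodule.subset_span ?_)
      simp only [Finset.coe_image, Set.mem_image, Finset.mem_coe, Finset.mem_erase]
      exact ⟨w, ⟨h, hw⟩, rfl⟩
  rw [hsurj, top_le_iff] at hle
  have h1 := finrank_span_finset_le_card (R := ℝ) ((S.erase w0).image fun w => y w - y w0)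
  rw [Set.finrank, hle, finrank_top, Module.finrank_fin_fun] at h1
  have h2 := Finset.card_image_le (s := S.erase w0) (f := fun w => y w - y w0)
  have h3 := Finset.card_erase_lt_of_mem hw0
  omega

open scoped Manifold ContDiff in
lemma aux_lebesgue (n : ℕ) {X : Type*} [TopologicalSpace X] (hX : CovDimLE X n)
    (f : (Fin (n+1) → ℝ) → X) (hf : Continuous f) (φ : Fin (n+1) → X → ℝ)
    (hφ : ∀ i, Continuous (φ i)) (δ : ℝ) (hδ : 0 < δ)
    (h0 : ∀ x ∈ Icc (0 : Fin (n+1) → ℝ) 1, ∀ i, x i = 0 → φ i (f x) ≤ 0)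
    (h1 : ∀ x ∈ Icc (0 : Fin (n+1) → ℝ) 1, ∀ i, x i = 1 → δ ≤ φ i (f x)) : False := by
  classical
  let O : (Fin (n+1) → Bool) → Set X := fun s =>
    ⋂ i, if s i = true then {x | δ / 3 < φ i x} else {x | φ i x < 2 * δ / 3}
  have hO : ∀ s, IsOpen (O s) := by
    intro s
    refine isOpen_iInter_of_finite fun i => ?_
    split_ifs
    · exact isOpen_lt continuous_const (hφ i)
    · exact isOpen_lt (hφ i) continuous_const
  obtain ⟨V, hVo, hVc, hVr, hVn⟩ := hX (Set.range O) (by rintro _ ⟨s, rfl⟩; exact hO s) (by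
    refine Set.eq_univ_of_forall fun x => ?_
    refine Set.mem_sUnion.2 ⟨_, ⟨fun i => decide (δ / 3 < φ i x), rfl⟩, ?_⟩
    refine Set.mem_iInter.2 fun i => ?_
    by_cases h : δ / 3 < φ i x
    · simp [h]
    · simp only [h, decide_false, Bool.false_eq_true, if_false, Set.mem_ofPred_eq]
      linarith)
  have hs : ∀ w : V, ∃ s, (w : Set X) ⊆ O s := by
    intro w
    obtain ⟨_, ⟨s, rfl⟩, h⟩ := hVr w w.2
    exact ⟨s, h⟩
  choose s hs using hs
  let U : V → Set (Fin (n+1) → ℝ) := fun w => f ⁻¹' w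
  have hUo : ∀ w, IsOpen (U w) := fun w => (hVo w w.2).preimage hf
  obtain ⟨ρ, hρ⟩ := SmoothPartitionOfUnity.exists_isSubordinate
    (I := 𝓘(ℝ, Fin (n+1) → ℝ)) (s := Icc (0 : Fin (n+1) → ℝ) 1) isClosed_Icc U hUo (by
      intro x _
      have : f x ∈ ⋃₀ V := by rw [hVc]; trivial
      obtain ⟨w, hw, hx⟩ := this
      exact Set.mem_iUnion.2 ⟨⟨w, hw⟩, hx⟩)
  let y : V → (Fin (n+1) → ℝ) := fun w i => if s w i = true then 1 else 0
  let G : (Fin (n+1) → ℝ) → (Fin (n+1) → ℝ) := fun x => ∑ᶠ w, ρ w x • y w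
  have hGs : ContDiff ℝ ∞ G := by
    have := ρ.contMDiff_finsum_smul (n := ⊤) (g := fun w _ => y w)
      (fun w x _ => contMDiffAt_const)
    exact contMDiff_iff_contDiff.1 this
  have hfin : ∀ x, (Function.support fun w => ρ w x).Finite := fun x =>
    ρ.locallyFinite.point_finite x
  have hmem : ∀ w x, ρ w x ≠ 0 → f x ∈ (w : Set X) := fun w x h =>
    hρ w (subset_tsupport _ h)
  -- coordinates
  have hGi : ∀ x i, G x i = ∑ w ∈ (hfin x).toFinset, ρ w x * y w i := by
    intro x i
    have : G x = ∑ w ∈ (hfin x).toFinset, ρ w x • y w := by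
      refine finsum_eq_sum_of_support_subset _ ?_
      intro w hw
      simp only [Function.mem_support, Set.Finite.coe_toFinset] at hw ⊢
      intro h; exact hw (by simp [h])
    rw [this]; simp
  have hsum1 : ∀ x ∈ Icc (0 : Fin (n+1) → ℝ) 1, ∑ w ∈ (hfin x).toFinset, ρ w x = 1 := by
    intro x hx
    rw [← ρ.sum_eq_one hx]
    refine (finsum_eq_sum_of_support_subset _ ?_).symm
    simp
  have hy0 : ∀ x ∈ Icc (0 : Fin (n+1) → ℝ) 1, ∀ i, x i = 0 → ∀ w, ρ w x ≠ 0 → y w i = 0 := by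
    intro x hx i hi w hw
    have := Set.mem_iInter.1 (hs w (hmem w x hw)) i
    by_contra hne
    have hsw : s w i = true := by
      by_contra h; exact hne (by simp [y, h])
    simp only [hsw, if_true, Set.mem_ofPred_eq] at this
    have := h0 x hx i hi
    linarith
  have hy1 : ∀ x ∈ Icc (0 : Fin (n+1) → ℝ) 1, ∀ i, x i = 1 → ∀ w, ρ w x ≠ 0 → y w i = 1 := by
    intro x hx i hi w hw
    have := Set.mem_iInter.1 (hs w (hmem w x hw)) i
    by_contra hne
    have hsw : ¬ s w i = true := by
      intro h; exact hne (by simp [y, h])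
    simp only [hsw, if_false, Set.mem_ofPred_eq] at this
    have := h1 x hx i hi
    simp at *
    linarith
  have hyb : ∀ w i, 0 ≤ y w i ∧ y w i ≤ 1 := by
    intro w i
    simp only [y]; split_ifs <;> norm_num
  have hdeg := aux_degree G (hGs.of_le (by norm_cast)) (by
    intro x hx
    refine ⟨fun i => ?_, fun i => ?_⟩
    · rw [hGi]
      exact Finset.sum_nonneg fun w _ => mul_nonneg (ρ.nonneg w x) (hyb w i).1
    · rw [hGi, Pi.one_apply, ← hsum1 x hx]
      exact Finset.sum_le_sum fun w _ => mul_le_of_le_one_right (ρ.nonneg w x) (hyb w i).2)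
    (by
      intro x hx i hi
      rw [hGi]
      refine Finset.sum_eq_zero fun w hw => ?_
      rw [hy0 x hx i hi w (by simpa using hw), mul_zero])
    (by
      intro x hx i hi
      rw [hGi, ← hsum1 x hx]
      refine Finset.sum_congr rfl fun w hw => ?_
      rw [hy1 x hx i hi w (by simpa using hw), mul_one])
  have hdz : ∀ x ∈ Set.pi Set.univ (fun _ : Fin (n+1) => Ioo (0:ℝ) 1), (fderiv ℝ G x).det = 0 := by
    intro x hx
    have hIo : IsOpen (Set.pi Set.univ (fun _ : Fin (n+1) => Ioo (0:ℝ) 1)) :=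
      isOpen_set_pi Set.finite_univ fun _ _ => isOpen_Ioo
    have hsub : Set.pi Set.univ (fun _ : Fin (n+1) => Ioo (0:ℝ) 1) ⊆ Icc (0 : Fin (n+1) → ℝ) 1 :=
      fun z hz => ⟨fun i => (hz i trivial).1.le, fun i => (hz i trivial).2.le⟩
    have hlf := ρ.locallyFinite x
    obtain ⟨nb, hnb, hnbf⟩ := hlf
    let T := hnbf.toFinset
    have hT : ∀ z ∈ nb, ∀ w, w ∉ T → ρ w z = 0 := by
      intro z hz w hw
      by_contra h
      exact hw (by simp only [T, Set.Finite.mem_toFinset]; exact ⟨z, h, hz⟩)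
    have hd : ∀ w, HasFDerivAt (ρ w) (fderiv ℝ (ρ w) x) x := by
      intro w
      have : ContDiff ℝ ∞ (ρ w) := contMDiff_iff_contDiff.1 (ρ w).contMDiff
      exact (this.differentiable (by simp) x).hasFDerivAt
    have hGd : HasFDerivAt G (∑ w ∈ T, (fderiv ℝ (ρ w) x).smulRight (y w)) x := by
      have h1 : HasFDerivAt (fun z => ∑ w ∈ T, ρ w z • y w)
          (∑ w ∈ T, (fderiv ℝ (ρ w) x).smulRight (y w)) x :=
        HasFDerivAt.fun_sum fun w _ => (hd w).smul_const (y w)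
      refine h1.congr_of_eventuallyEq ?_
      filter_upwards [hnb] with z hz
      refine finsum_eq_sum_of_support_subset _ ?_
      intro w hw
      by_contra h
      exact hw (by simp [hT z hz w h])
    have hsd : ∑ w ∈ T, fderiv ℝ (ρ w) x = 0 := by
      have h1 : HasFDerivAt (fun z => ∑ w ∈ T, ρ w z) (∑ w ∈ T, fderiv ℝ (ρ w) x) x :=
        HasFDerivAt.fun_sum fun w _ => hd w
      have h2 : HasFDerivAt (fun z => ∑ w ∈ T, ρ w z) (0 : (Fin (n+1) → ℝ) →L[ℝ] ℝ) x := by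
        refine (hasFDerivAt_const (1:ℝ) x).congr_of_eventuallyEq ?_
        filter_upwards [hnb, hIo.mem_nhds hx] with z hz hz2
        rw [← ρ.sum_eq_one (hsub hz2)]
        refine (finsum_eq_sum_of_support_subset _ ?_).symm
        intro w hw
        by_contra h
        exact hw (by simp [hT z hz w h])
      exact h1.unique h2
    have hz : ∀ w, ρ w x = 0 → fderiv ℝ (ρ w) x = 0 := by
      intro w hw
      apply IsLocalMin.fderiv_eq_zero
      exact Filter.Eventually.of_forall fun z => by rw [hw]; exact ρ.nonneg w z
    rw [hGd.fderiv]
    have hST : (hfin x).toFinset ⊆ T := by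
      intro w hw
      by_contra h
      exact (by simpa using hw : ρ w x ≠ 0) (hT x (mem_of_mem_nhds hnb) w h)
    refine aux_det_zero _ (hfin x).toFinset ?_ ?_ (fun w => fderiv ℝ (ρ w) x) y ?_ ?_
    · have h2 := hVn (f x)
      have h3 : (((hfin x).toFinset.image (Subtype.val) : Finset (Set X)) : Set (Set X)) ⊆
          {w ∈ V | f x ∈ w} := by
        intro w hw
        simp only [Finset.coe_image, Set.mem_image] at hw
        obtain ⟨w', hw', rfl⟩ := hw
        exact ⟨w'.2, hmem w' x (by simpa using hw')⟩
      have h4 := (Set.encard_le_encard h3).trans h2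
      rw [Set.encard_coe_eq_coe_finsetCard, Finset.card_image_of_injective _ Subtype.val_injective] at h4
      exact_mod_cast h4
    · by_contra h
      have h' := Finset.not_nonempty_iff_eq_empty.1 h
      have := hsum1 x (hsub hx)
      rw [h'] at this
      simp at this
    · rw [← hsd]
      refine Finset.sum_subset hST fun w _ hw => hz w (by simpa using hw)
    · intro v
      simp only [_root_.sum_apply, ContinuousLinearMap.smulRight_apply]
      refine (Finset.sum_subset hST fun w _ hw => ?_).symm
      rw [hz w (by simpa using hw)]; simp
  have hz : ∫ x in Icc (0 : Fin (n+1) → ℝ) 1, (fderiv ℝ G x).det = 0 := by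
    have hae : (Set.pi Set.univ fun i : Fin (n+1) => Ioo ((0 : Fin (n+1) → ℝ) i) ((1 : Fin (n+1) → ℝ) i)) =ᵐ[volume] Icc (0 : Fin (n+1) → ℝ) 1 :=
      Measure.univ_pi_Ioo_ae_eq_Icc
    rw [← setIntegral_congr_set hae]
    refine setIntegral_eq_zero_of_forall_eq_zero fun x hx => hdz x hx
  rw [hz] at hdeg
  exact zero_ne_one hdeg



lemma adm_of_glue {X Z : Type*} [MetricSpace X] [MetricSpace Z] (a : X) (c : Z) (t δ : ℝ)
    (hδ : 0 < δ) (k : X → Z → ℝ) (hk0 : ∀ x z, 0 ≤ k x z)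
    (k1 : ∀ x x' z, k x z ≤ dist x x' + k x' z) (k2 : ∀ x z z', k x z ≤ k x z' + dist z' z)
    (k3 : ∀ x x' z, dist x x' ≤ k x z + k x' z) (k4 : ∀ x z z', dist z z' ≤ k x z + k x z')
    (ht : 0 < t)
    (hac : k a c + δ < t) (hX : ∀ x, dist a x ≤ t⁻¹ → ∃ z, k x z + δ < t)
    (hZ : ∀ z, dist c z ≤ t⁻¹ → ∃ x, k x z + δ < t) :
    ∃ h : X ⊕ Z → X ⊕ Z → ℝ, IsAdmissiblePair a c t h := by
  let h : X ⊕ Z → X ⊕ Z → ℝ := fun p q => match p, q with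
    | .inl x, .inl x' => dist x x'
    | .inr z, .inr z' => dist z z'
    | .inl x, .inr z => k x z + δ
    | .inr z, .inl x => k x z + δ
  refine ⟨h, ?_, ?_, ?_, fun _ _ => rfl, fun _ _ => rfl, hac, ?_, ?_⟩
  · rintro (x | x) (y | y) <;> simp only [h, dist_eq_zero, Sum.inl.injEq, Sum.inr.injEq, reduceCtorEq, iff_false]
    · have := hk0 x y; linarith
    · have := hk0 y x; linarith
  · rintro (x | x) (y | y) <;> simp only [h, dist_comm]
  · rintro (x | x) (y | y) (z | z) <;> simp only [h]
    · exact dist_triangle _ _ _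
    · have := k1 x y z; linarith
    · have := k3 x z y; linarith
    · have := k2 x z y; linarith
    · have := k1 z y x; rw [dist_comm z y] at this; linarith
    · have := k4 y x z; linarith
    · have := k2 z x y; rw [dist_comm y x] at this; linarith
    · exact dist_triangle _ _ _
  · rintro (x | x) hx
    · exact hX x hx
    · exact ⟨x, by simpa [h] using ht⟩
  · rintro (x | x) hx
    · exact ⟨x, by simpa [h] using ht⟩
    · exact hZ x hx

lemma adm_symm {X Y : Type*} [MetricSpace X] [MetricSpace Y] {a : X} {b : Y} {t : ℝ}
    {h : X ⊕ Y → X ⊕ Y → ℝ} (H : IsAdmissiblePair a b t h) :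
    IsAdmissiblePair b a t (fun p q => h p.swap q.swap) := by
  obtain ⟨h1, h2, h3, h4, h5, h6, h7, h8⟩ := H
  refine ⟨?_, fun p q => h2 _ _, fun p q r => h3 _ _ _, ?_, ?_, ?_, ?_, ?_⟩
  · intro p q
    rw [h1]
    exact Sum.swap_leftInverse.injective.eq_iff
  · intro x y; simpa using h5 x y
  · intro x y; simpa using h4 x y
  · simp only [Sum.swap_inl, Sum.swap_inr]; rw [h2]; exact h6
  · intro p hp; simpa using h8 _ hp
  · intro p hp; simpa using h7 _ hp

lemma adm_trans {X Y Z : Type*} [MetricSpace X] [MetricSpace Y] [MetricSpace Z]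
    {a : X} {b : Y} {c : Z} {t s t' : ℝ} (ht : 0 < t) (hs : 0 < s) (hts : t + s < 1 / 2)
    (ht' : t + s < t')
    {h : X ⊕ Y → X ⊕ Y → ℝ} (H : IsAdmissiblePair a b t h)
    {g : Y ⊕ Z → Y ⊕ Z → ℝ} (G : IsAdmissiblePair b c s g) :
    ∃ f : X ⊕ Z → X ⊕ Z → ℝ, IsAdmissiblePair a c t' f := by
  obtain ⟨h1, h2, h3, h4, h5, h6, h7, h8⟩ := H
  obtain ⟨g1, g2, g3, g4, g5, g6, g7, g8⟩ := G
  have : Nonempty Y := ⟨b⟩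
  have hn : ∀ p q, 0 ≤ h p q := by
    intro p q
    have := h3 p q p
    rw [(h1 p p).2 rfl, h2 q p] at this
    linarith
  have gn : ∀ p q, 0 ≤ g p q := by
    intro p q
    have := g3 p q p
    rw [(g1 p p).2 rfl, g2 q p] at this
    linarith
  let F : X → Z → Y → ℝ := fun x z y => h (.inl x) (.inr y) + g (.inl y) (.inr z)
  have Fn : ∀ x z y, 0 ≤ F x z y := fun x z y => add_nonneg (hn _ _) (gn _ _)
  have Fb : ∀ x z, BddBelow (Set.range (F x z)) := fun x z =>
    ⟨0, by rintro _ ⟨y, rfl⟩; exact Fn x z y⟩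
  have hlt : ∀ x z y, F x z y < t + s → (⨅ y, F x z y) + (t' - (t + s)) < t' := by
    intro x z y hy
    have := ciInf_le (Fb x z) y
    linarith
  have inv1 : t'⁻¹ ≤ (t + s)⁻¹ := inv_anti₀ (by linarith) ht'.le
  have hd : 2 * t + (t + s)⁻¹ ≤ s⁻¹ := by
    rw [← sub_nonneg]
    have : s⁻¹ - (2 * t + (t + s)⁻¹) = t * (1 - 2 * (s * (t + s))) / (s * (t + s)) := by
      field_simp; ring
    rw [this]
    have : s * (t + s) < 1/2 := by nlinarith
    have : 0 ≤ 1 - 2 * (s * (t + s)) := by linarith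
    positivity
  have hd' : 2 * s + (t + s)⁻¹ ≤ t⁻¹ := by
    rw [← sub_nonneg]
    have : t⁻¹ - (2 * s + (t + s)⁻¹) = s * (1 - 2 * (t * (t + s))) / (t * (t + s)) := by
      field_simp; ring
    rw [this]
    have : t * (t + s) < 1/2 := by nlinarith
    have : 0 ≤ 1 - 2 * (t * (t + s)) := by linarith
    positivity
  refine adm_of_glue a c t' (t' - (t + s)) (by linarith) (fun x z => ⨅ y, F x z y) ?_ ?_ ?_ ?_ ?_
    (by linarith) ?_ ?_ ?_
  · exact fun x z => Real.iInf_nonneg (Fn x z)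
  · intro x x' z
    rw [← sub_le_iff_le_add']
    refine le_ciInf fun y => ?_
    have e1 := ciInf_le (Fb x z) y
    have e2 := h3 (.inl x) (.inl x') (.inr y)
    rw [h4] at e2
    simp only [F] at e1 ⊢
    linarith
  · intro x z z'
    rw [← sub_le_iff_le_add]
    refine le_ciInf fun y => ?_
    have e1 := ciInf_le (Fb x z) y
    have e2 := g3 (.inl y) (.inr z') (.inr z)
    rw [g5] at e2
    simp only [F] at e1 ⊢
    linarith
  · intro x x' z
    refine le_ciInf_add_ciInf fun y y' => ?_
    have e1 := h3 (.inl x) (.inr y) (.inl x')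
    have e2 := h3 (.inr y) (.inr y') (.inl x')
    have e3 := g3 (.inl y) (.inr z) (.inl y')
    rw [h4] at e1
    rw [h5, h2 (.inr y')] at e2
    rw [g4, g2 (.inr z)] at e3
    simp only [F]
    linarith
  · intro x z z'
    refine le_ciInf_add_ciInf fun y y' => ?_
    have e1 := g3 (.inr z) (.inl y) (.inr z')
    have e2 := g3 (.inl y) (.inl y') (.inr z')
    have e3 := h3 (.inr y) (.inl x) (.inr y')
    rw [g5, g2 (.inr z)] at e1
    rw [g4] at e2
    rw [h5, h2 (.inr y)] at e3
    simp only [F]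
    linarith
  · exact hlt a c b (by simp only [F]; linarith)
  · intro x hx
    have hx1 : h (.inl a) (.inl x) ≤ t⁻¹ := by
      rw [h4]; linarith
    obtain ⟨y, hy⟩ := h7 _ hx1
    have hy2 : g (.inl b) (.inl y) ≤ s⁻¹ := by
      rw [g4, ← h5]
      have e1 := h3 (.inr b) (.inl a) (.inr y)
      have e2 := h3 (.inl a) (.inl x) (.inr y)
      rw [h2 (.inr b) (.inl a)] at e1
      rw [h4] at e2
      linarith
    obtain ⟨z, hz⟩ := g7 _ hy2
    exact ⟨z, hlt x z y (by simp only [F]; linarith)⟩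
  · intro z hz
    have hx1 : g (.inr c) (.inr z) ≤ s⁻¹ := by
      rw [g5]; linarith
    obtain ⟨y, hy⟩ := g8 _ hx1
    have hy2 : h (.inr b) (.inr y) ≤ t⁻¹ := by
      rw [h5, ← g4]
      have e1 := g3 (.inl b) (.inr c) (.inl y)
      have e2 := g3 (.inr c) (.inr z) (.inl y)
      rw [g5] at e2
      linarith
    obtain ⟨x, hx⟩ := h8 _ hy2
    rw [g2] at hy
    rw [h2] at hx
    exact ⟨x, hlt x z y (by simp only [F]; linarith)⟩

lemma pghSet_bdd (X Y : Type*) [MetricSpace X] [MetricSpace Y] (a : X) (b : Y) :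
    BddBelow (insert (1 / 2 : ℝ)
    {t : ℝ | 0 < t ∧ ∃ h : X ⊕ Y → X ⊕ Y → ℝ, IsAdmissiblePair a b t h}) := by
  refine ⟨0, ?_⟩
  rintro t (rfl | ⟨h, _⟩)
  · norm_num
  · exact h.le

lemma pghDist_nonneg (p q : PointedProperMetricSpace) : 0 ≤ pghDist p q := by
  refine Real.sInf_nonneg ?_
  rintro t (rfl | ⟨h, _⟩)
  · norm_num
  · exact h.le

lemma pghDist_le_half (p q : PointedProperMetricSpace) : pghDist p q ≤ 1 / 2 :=
  csInf_le (pghSet_bdd _ _ _ _) (Set.mem_insert _ _)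

lemma pghDist_le_of_adm {p q : PointedProperMetricSpace} {t : ℝ} (ht : 0 < t)
    (h : ∃ h : p.carrier ⊕ q.carrier → p.carrier ⊕ q.carrier → ℝ,
      IsAdmissiblePair p.pt q.pt t h) : pghDist p q ≤ t :=
  csInf_le (pghSet_bdd _ _ _ _) (Set.mem_insert_of_mem _ ⟨ht, h⟩)

lemma exists_adm_of_lt {p q : PointedProperMetricSpace} {t : ℝ} (ht : t ≤ 1 / 2)
    (h : pghDist p q < t) : ∃ t', 0 < t' ∧ t' < t ∧
      ∃ h : p.carrier ⊕ q.carrier → p.carrier ⊕ q.carrier → ℝ,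
      IsAdmissiblePair p.pt q.pt t' h := by
  obtain ⟨t', h1, h2⟩ := exists_lt_of_csInf_lt ⟨_, Set.mem_insert _ _⟩ h
  rcases h1 with rfl | ⟨h3, h4⟩
  · linarith
  · exact ⟨t', h3, h2, h4⟩

lemma pghDist_comm (p q : PointedProperMetricSpace) : pghDist p q = pghDist q p := by
  have key : ∀ p q : PointedProperMetricSpace, pghDist p q ≤ pghDist q p := by
    intro p q
    by_contra hlt
    push Not at hlt
    obtain ⟨t', h0, h1, h, H⟩ := exists_adm_of_lt (pghDist_le_half p q) hlt
    have := pghDist_le_of_adm h0 ⟨_, adm_symm H⟩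
    linarith
  exact le_antisymm (key _ _) (key _ _)

lemma pghDist_triangle (p q r : PointedProperMetricSpace) :
    pghDist p r ≤ pghDist p q + pghDist q r := by
  by_contra hlt
  push Not at hlt
  have hh := pghDist_le_half p r
  set e := (pghDist p r - (pghDist p q + pghDist q r)) / 3 with he
  have hp1 := pghDist_nonneg p q
  have hp2 := pghDist_nonneg q r
  obtain ⟨t, t0, t1, h, H⟩ := exists_adm_of_lt (p := p) (q := q) (t := pghDist p q + e)
    (by linarith) (by linarith)
  obtain ⟨s, s0, s1, g, G⟩ := exists_adm_of_lt (p := q) (q := r) (t := pghDist q r + e)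
    (by linarith) (by linarith)
  have := pghDist_le_of_adm (t := pghDist p q + pghDist q r + 2 * e) (by linarith)
    (adm_trans t0 s0 (by linarith) (by linarith) H G)
  linarith

/-- Upper bound from realisation in a common metric space. -/
lemma pghDist_le_of_embed {W : Type*} [MetricSpace W] (p q : PointedProperMetricSpace)
    (i : p.carrier → W) (j : q.carrier → W) (hi : Isometry i) (hj : Isometry j)
    (hb : i p.pt = j q.pt) {s t : ℝ} (hs : 0 ≤ s) (hst : s < t)
    (h1 : ∀ x, dist p.pt x ≤ t⁻¹ → ∃ y, dist (i x) (j y) ≤ s)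
    (h2 : ∀ y, dist q.pt y ≤ t⁻¹ → ∃ x, dist (i x) (j y) ≤ s) : pghDist p q ≤ t := by
  refine pghDist_le_of_adm (by linarith) ?_
  refine adm_of_glue p.pt q.pt t ((t - s) / 2) (by linarith) (fun x y => dist (i x) (j y))
    (fun _ _ => dist_nonneg) ?_ ?_ ?_ ?_ (by linarith) ?_ ?_ ?_
  · intro x x' z
    rw [← hi.dist_eq x x']; exact dist_triangle _ _ _
  · intro x z z'
    rw [← hj.dist_eq z' z]; exact dist_triangle _ _ _
  · intro x x' z
    rw [← hi.dist_eq x x']; exact dist_triangle_right _ _ _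
  · intro x z z'
    rw [← hj.dist_eq z z']; exact dist_triangle_left _ _ _
  · simp only [hb, dist_self]; linarith
  · intro x hx
    obtain ⟨y, hy⟩ := h1 x hx
    exact ⟨y, by linarith⟩
  · intro x hx
    obtain ⟨y, hy⟩ := h2 x hx
    exact ⟨y, by linarith⟩

lemma pghDist_eq_zero_of_equiv {p q : PointedProperMetricSpace} (h : p ≈ q) :
    pghDist p q = 0 := by
  obtain ⟨e, he⟩ := h
  refine le_antisymm (le_of_forall_pos_le_add fun ε hε => ?_) (pghDist_nonneg _ _)
  rw [zero_add]
  refine pghDist_le_of_embed p q e id e.isometry isometry_id he le_rfl hε ?_ ?_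
  · intro x _; exact ⟨e x, by simp⟩
  · intro y _; exact ⟨e.symm y, by simp⟩

lemma pghDist_self (p : PointedProperMetricSpace) : pghDist p p = 0 :=
  pghDist_eq_zero_of_equiv (Setoid.refl p)

lemma pgh_exists_ball {O : Set PointedProperMetricSpace} (hO : IsOpen O)
    {p : PointedProperMetricSpace} (hp : p ∈ O) : ∃ ε > 0, ∀ q, pghDist p q < ε → q ∈ O := by
  induction hO with
  | basic s hs =>
    obtain ⟨r, ε, hε, rfl⟩ := hs
    refine ⟨ε - pghDist r p, by simpa using hp, fun q hq => ?_⟩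
    have := pghDist_triangle r p q
    change pghDist r q < ε
    linarith
  | univ => exact ⟨1, one_pos, fun _ _ => trivial⟩
  | inter s t _ _ ih1 ih2 =>
    obtain ⟨e1, h1, h1'⟩ := ih1 hp.1
    obtain ⟨e2, h2, h2'⟩ := ih2 hp.2
    exact ⟨min e1 e2, lt_min h1 h2, fun q hq =>
      ⟨h1' q (hq.trans_le (min_le_left _ _)), h2' q (hq.trans_le (min_le_right _ _))⟩⟩
  | sUnion S _ ih =>
    obtain ⟨s, hs, hps⟩ := hp
    obtain ⟨e, h, h'⟩ := ih s hs hps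
    exact ⟨e, h, fun q hq => ⟨s, hs, h' q hq⟩⟩

lemma pgh_ball_open (p : PointedProperMetricSpace) {ε : ℝ} (hε : 0 < ε) :
    IsOpen {q | pghDist p q < ε} :=
  TopologicalSpace.isOpen_generateFrom_of_mem ⟨p, ε, hε, rfl⟩

lemma pgh_continuous {T : Type*} [PseudoMetricSpace T] (f : T → PointedProperMetricSpace)
    (h : ∀ x, ∀ ε > 0, ∃ δ > 0, ∀ y, dist y x < δ → pghDist (f x) (f y) < ε) : Continuous f := by
  refine continuous_def.2 fun O hO => Metric.isOpen_iff.2 fun x hx => ?_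
  obtain ⟨ε, hε, hb⟩ := pgh_exists_ball hO hx
  obtain ⟨δ, hδ, hd⟩ := h x ε hε
  exact ⟨δ, hδ, fun y hy => hb _ (hd y hy)⟩

lemma pgh_continuous_real (φ : PointedProperMetricSpace → ℝ)
    (h : ∀ p q, φ q ≤ φ p + pghDist p q) : Continuous φ := by
  refine continuous_iff_continuousAt.2 fun p => ?_
  refine Metric.tendsto_nhds.2 fun ε hε => ?_
  filter_upwards [(pgh_ball_open p hε).mem_nhds (by simpa [pghDist_self] using hε)] with q hq
  have h1 := h p q
  have h2 := h q p
  rw [pghDist_comm q p] at h2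
  have hq' : pghDist p q < ε := hq
  rw [Real.dist_eq, abs_lt]
  constructor <;> linarith

/-- distance to a family, as a function on the quotient -/
noncomputable def pghInf {T : Type} (F : T → PointedProperMetricSpace)
    (q : PointedProperMetricSpace) : ℝ := ⨅ x, pghDist q (F x)

lemma pghInf_bdd {T : Type} (F : T → PointedProperMetricSpace) (q : PointedProperMetricSpace) :
    BddBelow (Set.range fun x => pghDist q (F x)) :=
  ⟨0, by rintro _ ⟨x, rfl⟩; exact pghDist_nonneg _ _⟩

lemma pghInf_lip {T : Type} [Nonempty T] (F : T → PointedProperMetricSpace)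
    (p q : PointedProperMetricSpace) : pghInf F q ≤ pghInf F p + pghDist p q := by
  rw [← sub_le_iff_le_add]
  refine le_ciInf fun x => ?_
  have h1 : pghInf F q ≤ pghDist q (F x) := ciInf_le (pghInf_bdd F q) x
  have h2 := pghDist_triangle q p (F x)
  rw [pghDist_comm q p] at h2
  linarith

noncomputable def pghInfQ {T : Type} [Nonempty T] (F : T → PointedProperMetricSpace) :
    PGHSpace → ℝ :=
  Quotient.lift (pghInf F) (by
    intro p q h
    have h0 := pghDist_eq_zero_of_equiv h
    have h1 := pghInf_lip F p q
    have h2 := pghInf_lip F q p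
    rw [pghDist_comm q p] at h2
    linarith)

lemma pghInfQ_continuous {T : Type} [Nonempty T] (F : T → PointedProperMetricSpace) :
    Continuous (pghInfQ F) :=
  Continuous.quotient_lift (pgh_continuous_real _ (pghInf_lip F)) _



/-- CAT(0) pair inside a subset of a metric space. -/
def CatPair {W : Type*} [MetricSpace W] (S : Set W) (x y : W) : Prop :=
  ∃ γ : ℝ → W, γ 0 = x ∧ γ 1 = y ∧ (∀ t ∈ Icc (0:ℝ) 1, γ t ∈ S) ∧
    (∀ s ∈ Icc (0:ℝ) 1, ∀ t ∈ Icc (0:ℝ) 1, dist (γ s) (γ t) = |s - t| * dist x y) ∧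
    ∀ z ∈ S, ∀ t ∈ Icc (0:ℝ) 1, dist z (γ t) ^ 2 ≤
        (1 - t) * dist z x ^ 2 + t * dist z y ^ 2 - t * (1 - t) * dist x y ^ 2

def CatSet {W : Type*} [MetricSpace W] (S : Set W) : Prop := ∀ x ∈ S, ∀ y ∈ S, CatPair S x y

lemma CatPair.symm {W : Type*} [MetricSpace W] {S : Set W} {x y : W} (h : CatPair S x y) :
    CatPair S y x := by
  obtain ⟨γ, h0, h1, hS, hg, hc⟩ := h
  have hm : ∀ t ∈ Icc (0:ℝ) 1, 1 - t ∈ Icc (0:ℝ) 1 := fun t ht => ⟨by linarith [ht.2], by linarith [ht.1]⟩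
  refine ⟨fun t => γ (1 - t), by simpa using h1, by simpa using h0, fun t ht => hS _ (hm t ht), ?_, ?_⟩
  · intro s hs t ht
    rw [hg _ (hm s hs) _ (hm t ht), dist_comm x y, abs_sub_comm]
    congr 2; ring
  · intro z hz t ht
    have := hc z hz _ (hm t ht)
    rw [dist_comm y x]
    refine this.trans (le_of_eq ?_)
    ring

lemma CatSet.isCAT0 {W : Type*} [MetricSpace W] {S : Set W} (h : CatSet S) : IsCAT0Space ↥S := by
  have key : ∀ x y : S, ∃ γ : ℝ → S, γ 0 = x ∧ γ 1 = y ∧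
      (∀ s ∈ Icc (0:ℝ) 1, ∀ t ∈ Icc (0:ℝ) 1, dist (γ s) (γ t) = |s - t| * dist x y) ∧
      ∀ z : S, ∀ t ∈ Icc (0:ℝ) 1, dist z (γ t) ^ 2 ≤
        (1 - t) * dist z x ^ 2 + t * dist z y ^ 2 - t * (1 - t) * dist x y ^ 2 := by
    intro x y
    obtain ⟨γ, h0, h1, hS, hg, hc⟩ := h x x.2 y y.2
    classical
    refine ⟨fun t => if ht : t ∈ Icc (0:ℝ) 1 then ⟨γ t, hS t ht⟩ else x, ?_, ?_, ?_, ?_⟩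
    · simp [h0]
    · simp [h1]
    · intro s hs t ht
      simp only [hs, ht, dif_pos, Subtype.dist_eq]
      exact hg s hs t ht
    · intro z t ht
      simp only [ht, dif_pos, Subtype.dist_eq]
      exact hc z z.2 t ht
  refine ⟨fun x y => ?_, ?_⟩
  · obtain ⟨γ, h0, h1, hg, -⟩ := key x y
    exact ⟨γ, h0, h1, hg⟩
  · intro x y z γ h0 h1 hg t ht
    obtain ⟨γ', h0', h1', hg', hc'⟩ := key x y
    have e := hc' (γ t) t ht
    have hx : dist (γ t) x = t * dist x y := by
      have := hg t ht 0 (by simp)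
      rw [h0] at this
      rw [this, sub_zero, abs_of_nonneg ht.1]
    have hy : dist (γ t) y = (1 - t) * dist x y := by
      have := hg t ht 1 (by simp)
      rw [h1] at this
      rw [this, abs_sub_comm, abs_of_nonneg (by linarith [ht.2])]
    rw [hx, hy] at e
    have e2 : dist (γ t) (γ' t) ^ 2 ≤ 0 := e.trans (le_of_eq (by ring))
    have e3 : dist (γ t) (γ' t) = 0 := by
      have := sq_nonneg (dist (γ t) (γ' t))
      exact pow_eq_zero_iff (two_ne_zero) |>.1 (le_antisymm e2 this)
    rw [dist_eq_zero.1 e3]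
    exact hc' z t ht

lemma IsCAT0Space.catSet_range {X W : Type*} [MetricSpace X] [MetricSpace W] (h : IsCAT0Space X)
    (i : X → W) (hi : Isometry i) : CatSet (Set.range i) := by
  rintro _ ⟨x, rfl⟩ _ ⟨y, rfl⟩
  obtain ⟨γ, h0, h1, hg⟩ := h.1 x y
  refine ⟨fun t => i (γ t), by simp [h0], by simp [h1], fun t _ => ⟨_, rfl⟩, ?_, ?_⟩
  · intro s hs t ht
    rw [hi.dist_eq, hi.dist_eq]; exact hg s hs t ht
  · rintro _ ⟨z, rfl⟩ t ht
    simp only [hi.dist_eq]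
    exact h.2 x y z γ h0 h1 hg t ht

lemma IsCAT0Space.of_isometryEquiv {X Y : Type*} [MetricSpace X] [MetricSpace Y]
    (h : IsCAT0Space X) (e : X ≃ᵢ Y) : IsCAT0Space Y := by
  have h1 := (h.catSet_range e e.isometry)
  rw [e.surjective.range_eq] at h1
  have h2 := h1.isCAT0.catSet_range (Subtype.val) isometry_subtype_coe
  -- transfer from univ
  refine ⟨fun x y => ?_, fun x y z γ h0 hh1 hg t ht => ?_⟩
  · obtain ⟨γ, a, b, _, c, _⟩ := h1 x trivial y trivial
    exact ⟨γ, a, b, c⟩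
  · have := h1.isCAT0.2 ⟨x, trivial⟩ ⟨y, trivial⟩ ⟨z, trivial⟩ (fun t => ⟨γ t, trivial⟩)
      (by simp [h0]) (by simp [hh1]) (by simpa [Subtype.dist_eq] using hg) t ht
    simpa [Subtype.dist_eq] using this

lemma conv_of_CN {p a b c t : ℝ} (hp : 0 ≤ p) (ha : 0 ≤ a) (hb : 0 ≤ b) (h1 : |a - b| ≤ c)
    (ht0 : 0 ≤ t) (ht1 : t ≤ 1) (h : p ^ 2 ≤ (1 - t) * a ^ 2 + t * b ^ 2 - t * (1 - t) * c ^ 2) :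
    p ≤ (1 - t) * a + t * b := by
  have h2 : (a - b) ^ 2 ≤ c ^ 2 := sq_le_sq' (by linarith [neg_abs_le (a - b)]) ((le_abs_self _).trans h1)
  have h3 : 0 ≤ t * (1 - t) := mul_nonneg ht0 (by linarith)
  have h4 : p ^ 2 ≤ ((1 - t) * a + t * b) ^ 2 := by nlinarith
  have h5 : 0 ≤ (1 - t) * a + t * b := by
    have : 0 ≤ 1 - t := by linarith
    positivity
  exact (sq_le_sq₀ hp h5).1 h4

lemma glue_alg1 {a b l1 l2 t r P : ℝ} (hl1 : 0 < l1) (hl2 : 0 < l2) (ht0 : 0 ≤ t)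
    (hr : r * l1 = t * (l1 + l2)) (hab : |b - l1| ≤ a)
    (hP : P ≤ (1 - r) * a ^ 2 + r * b ^ 2 - r * (1 - r) * l1 ^ 2) :
    P ≤ (1 - t) * a ^ 2 + t * (b + l2) ^ 2 - t * (1 - t) * (l1 + l2) ^ 2 := by
  have h2 : (b - l1) ^ 2 ≤ a ^ 2 := sq_le_sq' (by linarith [neg_abs_le (b - l1)]) ((le_abs_self _).trans hab)
  have hr' : r = t * (l1 + l2) / l1 := by field_simp; linarith
  have : (1 - t) * a ^ 2 + t * (b + l2) ^ 2 - t * (1 - t) * (l1 + l2) ^ 2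
    - ((1 - r) * a ^ 2 + r * b ^ 2 - r * (1 - r) * l1 ^ 2) = t / l1 * l2 * (a ^ 2 - (b - l1) ^ 2) := by
    rw [hr']; field_simp; ring
  have h3 : 0 ≤ t / l1 * l2 * (a ^ 2 - (b - l1) ^ 2) := by
    have : 0 ≤ a ^ 2 - (b - l1) ^ 2 := by linarith
    positivity
  linarith

lemma glue_alg2 {a b l1 l2 t : ℝ} (ht1 : t ≤ 1) (hab : |b - l1| ≤ a) :
    (b + (t * (l1 + l2) - l1)) ^ 2 ≤
      (1 - t) * a ^ 2 + t * (b + l2) ^ 2 - t * (1 - t) * (l1 + l2) ^ 2 := by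
  have h2 : (b - l1) ^ 2 ≤ a ^ 2 := sq_le_sq' (by linarith [neg_abs_le (b - l1)]) ((le_abs_self _).trans hab)
  have : (1 - t) * a ^ 2 + t * (b + l2) ^ 2 - t * (1 - t) * (l1 + l2) ^ 2
    - (b + (t * (l1 + l2) - l1)) ^ 2 = (1 - t) * (a ^ 2 - (b - l1) ^ 2) := by ring
  have h3 : 0 ≤ (1 - t) * (a ^ 2 - (b - l1) ^ 2) := mul_nonneg (by linarith) (by linarith)
  linarith

lemma CatPair.extend {W : Type*} [MetricSpace W] {A C : Set W} {o x y : W}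
    (hoA : o ∈ A) (hx : x ∈ A) (hy : y ∈ A)
    (hd : ∀ x ∈ A, ∀ c ∈ C, dist x c = dist x o + dist o c) (h : CatPair A x y) :
    CatPair (A ∪ C) x y := by
  obtain ⟨γ, h0, h1, hS, hg, hc⟩ := h
  refine ⟨γ, h0, h1, fun t ht => Or.inl (hS t ht), hg, ?_⟩
  rintro z (hz | hz) t ht
  · exact hc z hz t ht
  · have e := hc o hoA t ht
    have e1 : dist o (γ t) ≤ (1 - t) * dist o x + t * dist o y :=
      conv_of_CN dist_nonneg dist_nonneg dist_nonneg (by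
        rw [dist_comm o x, dist_comm o y]; exact abs_dist_sub_le x y o) ht.1 ht.2 e
    rw [dist_comm z (γ t), dist_comm z x, dist_comm z y, hd _ (hS t ht) z hz, hd _ hx z hz, hd _ hy z hz,
      dist_comm (γ t) o, dist_comm x o, dist_comm y o]
    have : 0 ≤ dist o z := dist_nonneg
    nlinarith

lemma CatPair.glue {W : Type*} [MetricSpace W] {A C : Set W} {o x y : W}
    (hoA : o ∈ A) (hoC : o ∈ C) (hx : x ∈ A) (hy : y ∈ C)
    (hd : ∀ x ∈ A, ∀ c ∈ C, dist x c = dist x o + dist o c) (hA : CatPair A x o)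
    (hC : CatPair C o y) (hxo : x ≠ o) (hyo : o ≠ y) : CatPair (A ∪ C) x y := by
  obtain ⟨γ, h0, h1, hS, hg, hc⟩ := hA
  obtain ⟨β, b0, b1, bS, bg, bc⟩ := hC
  set l1 := dist x o with hl1
  set l2 := dist o y with hl2
  have p1 : 0 < l1 := dist_pos.2 hxo
  have p2 : 0 < l2 := dist_pos.2 hyo
  have hL : dist x y = l1 + l2 := hd x hx y hy
  classical
  have m1 : ∀ t ∈ Icc (0:ℝ) 1, t * (l1 + l2) ≤ l1 → t * (l1 + l2) / l1 ∈ Icc (0:ℝ) 1 := by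
    intro t ht h
    exact ⟨by have := ht.1; positivity, by rw [div_le_one p1]; exact h⟩
  have m2 : ∀ t ∈ Icc (0:ℝ) 1, ¬ t * (l1 + l2) ≤ l1 → (t * (l1 + l2) - l1) / l2 ∈ Icc (0:ℝ) 1 := by
    intro t ht h
    push Not at h
    refine ⟨div_nonneg (by linarith) p2.le, ?_⟩
    rw [div_le_one p2]
    nlinarith [ht.2]
  have do1 : ∀ t ∈ Icc (0:ℝ) 1, t * (l1 + l2) ≤ l1 →
      dist (γ (t * (l1 + l2) / l1)) o = l1 - t * (l1 + l2) := by
    intro t ht h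
    rw [← h1, hg _ (m1 t ht h) 1 (by simp), abs_sub_comm, abs_of_nonneg (by linarith [(m1 t ht h).2])]
    field_simp
  have do2 : ∀ t ∈ Icc (0:ℝ) 1, ¬ t * (l1 + l2) ≤ l1 →
      dist o (β ((t * (l1 + l2) - l1) / l2)) = t * (l1 + l2) - l1 := by
    intro t ht h
    rw [← b0, bg 0 (by simp) _ (m2 t ht h), abs_sub_comm, sub_zero, abs_of_nonneg (m2 t ht h).1]
    field_simp
  refine ⟨fun t => if t * (l1 + l2) ≤ l1 then γ (t * (l1 + l2) / l1) else
    β ((t * (l1 + l2) - l1) / l2), ?_, ?_, ?_, ?_, ?_⟩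
  · simp [p1.le, h0]
  · have : ¬ (1:ℝ) * (l1 + l2) ≤ l1 := by linarith
    simp only [this, if_false]
    rw [← b1]; congr 1; field_simp; ring
  · intro t ht
    by_cases h : t * (l1 + l2) ≤ l1
    · simp only [h, if_true]; exact Or.inl (hS _ (m1 t ht h))
    · simp only [h, if_false]; exact Or.inr (bS _ (m2 t ht h))
  · have main : ∀ s ∈ Icc (0:ℝ) 1, ∀ t ∈ Icc (0:ℝ) 1, s * (l1 + l2) ≤ l1 → ¬ t * (l1 + l2) ≤ l1 →
        dist (γ (s * (l1 + l2) / l1)) (β ((t * (l1 + l2) - l1) / l2)) = |s - t| * (l1 + l2) := by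
      intro s hs t ht h h'
      rw [hd _ (hS _ (m1 s hs h)) _ (bS _ (m2 t ht h')), do1 s hs h, do2 t ht h']
      have : s < t := by
        push Not at h'
        have : s * (l1 + l2) < t * (l1 + l2) := by linarith
        exact lt_of_mul_lt_mul_right this (by positivity)
      rw [abs_of_neg (by linarith)]
      ring
    intro s hs t ht
    rw [hL]
    by_cases h : s * (l1 + l2) ≤ l1 <;> by_cases h' : t * (l1 + l2) ≤ l1 <;>
      simp only [h, h', if_true, if_false]
    · rw [hg _ (m1 s hs h) _ (m1 t ht h'), ← sub_div, abs_div, abs_of_pos p1, ← sub_mul, abs_mul,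
        abs_of_pos (a := l1 + l2) (by positivity)]
      field_simp
    · exact main s hs t ht h h'
    · rw [dist_comm, main t ht s hs h' h, abs_sub_comm]
    · rw [bg _ (m2 s hs h) _ (m2 t ht h'), ← sub_div, abs_div, abs_of_pos p2, sub_sub_sub_cancel_right,
        ← sub_mul, abs_mul, abs_of_pos (a := l1 + l2) (by positivity)]
      field_simp
  · rintro z (hz | hz) t ht
    · have hzy : dist z y = dist z o + l2 := hd z hz y hy
      have hab : |dist z o - l1| ≤ dist z x := by
        rw [hl1]
        exact abs_dist_sub_le z x o
      rw [hL, hzy]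
      by_cases h : t * (l1 + l2) ≤ l1
      · simp only [h, if_true]
        refine glue_alg1 p1 p2 ht.1 (r := t * (l1 + l2) / l1) (by field_simp) hab ?_
        exact hc z hz _ (m1 t ht h)
      · simp only [h, if_false]
        rw [hd z hz _ (bS _ (m2 t ht h)), do2 t ht h]
        exact glue_alg2 ht.2 hab
    · have hzx : dist z x = dist z o + l1 := by
        rw [dist_comm, hd x hx z hz, dist_comm o z, add_comm]
      have hab : |dist z o - l2| ≤ dist z y := by
        rw [hl2, dist_comm o y]
        exact abs_dist_sub_le z y o
      rw [hL, hzx]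
      by_cases h : t * (l1 + l2) ≤ l1
      · simp only [h, if_true]
        rw [dist_comm, hd _ (hS _ (m1 t ht h)) z hz, do1 t ht h, dist_comm o z]
        have := glue_alg2 (l1 := l2) (l2 := l1) (t := 1 - t) (by linarith [ht.1]) hab
        refine le_trans (le_of_eq ?_) (this.trans (le_of_eq ?_)) <;> ring
      · simp only [h, if_false]
        have := glue_alg1 (l1 := l2) (l2 := l1) (t := 1 - t) p2 p1 (by linarith [ht.2])
          (r := 1 - (t * (l1 + l2) - l1) / l2) (by field_simp; ring) hab
          (P := dist z (β ((t * (l1 + l2) - l1) / l2)) ^ 2) (by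
            refine (bc z hz _ (m2 t ht h)).trans (le_of_eq ?_)
            ring)
        refine this.trans (le_of_eq ?_)
        ring

lemma CatSet.glue {W : Type*} [MetricSpace W] {A C : Set W} {o : W}
    (hoA : o ∈ A) (hoC : o ∈ C)
    (hd : ∀ x ∈ A, ∀ c ∈ C, dist x c = dist x o + dist o c) (hA : CatSet A)
    (hC : CatSet C) : CatSet (A ∪ C) := by
  have hd' : ∀ x ∈ C, ∀ c ∈ A, dist x c = dist x o + dist o c := by
    intro x hx c hc
    rw [dist_comm, hd c hc x hx, dist_comm c, dist_comm o x, add_comm]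
  have key : ∀ x ∈ A, ∀ y ∈ C, CatPair (A ∪ C) x y := by
    intro x hx y hy
    by_cases hxo : x = o
    · subst hxo
      rw [Set.union_comm]
      exact CatPair.extend hoC hoC hy hd' (hC _ hoC _ hy)
    by_cases hyo : o = y
    · subst hyo
      exact CatPair.extend hoA hx hoA hd (hA _ hx _ hoA)
    exact CatPair.glue hoA hoC hx hy hd (hA _ hx _ hoA) (hC _ hoC _ hy) hxo hyo
  rintro x (hx | hx) y (hy | hy)
  · exact CatPair.extend hoA hx hy hd (hA _ hx _ hy)
  · exact key x hx y hy
  · exact (key y hy x hx).symm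
  · rw [Set.union_comm]
    exact CatPair.extend hoC hx hy hd' (hC _ hx _ hy)

lemma catSet_segment {W : Type*} [MetricSpace W] (κ : ℝ → W) (l : ℝ)
    (hκ : ∀ s s', dist (κ s) (κ s') = |s - s'|) : CatSet (κ '' Icc 0 l) := by
  rintro _ ⟨s, hs, rfl⟩ _ ⟨s', hs', rfl⟩
  refine ⟨fun t => κ ((1 - t) * s + t * s'), by simp, by simp, ?_, ?_, ?_⟩
  · intro t ht
    exact ⟨_, convex_Icc 0 l hs hs' (by linarith [ht.2] : 0 ≤ 1 - t) ht.1 (by ring), rfl⟩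
  · intro t _ t' _
    rw [hκ, hκ, ← abs_mul, ← abs_neg]
    congr 1; ring
  · rintro _ ⟨r, hr, rfl⟩ t ht
    simp only [hκ, sq_abs]
    exact le_of_eq (by ring)



/-- Truncation of a pointed space. -/
def truncSet {X : Type*} [MetricSpace X] (a : X) (u : ℝ) : Set X := {x | (1 - u) * dist a x ≤ u}

lemma truncSet_closed {X : Type*} [MetricSpace X] (a : X) (u : ℝ) : IsClosed (truncSet a u) :=
  isClosed_le (by fun_prop) (by fun_prop)

lemma truncSet_base {X : Type*} [MetricSpace X] (a : X) {u : ℝ} (hu : 0 ≤ u) :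
    a ∈ truncSet a u := by simpa [truncSet] using hu

lemma truncSet_cat {X : Type*} [MetricSpace X] (hX : IsCAT0Space X) (a : X) {u : ℝ} (hu : u ≤ 1) :
    CatSet (truncSet a u) := by
  intro x hx y hy
  obtain ⟨γ, h0, h1, hg⟩ := hX.1 x y
  have hc := fun z => hX.2 x y z γ h0 h1 hg
  refine ⟨γ, h0, h1, ?_, hg, fun z _ => hc z⟩
  intro t ht
  have := conv_of_CN dist_nonneg dist_nonneg dist_nonneg (abs_dist_sub_le x y a |> fun h => by
    rwa [dist_comm x a, dist_comm y a] at h) ht.1 ht.2 (hc a t ht)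
  have hx' : (1 - u) * dist a x ≤ u := hx
  have hy' : (1 - u) * dist a y ≤ u := hy
  change (1 - u) * dist a (γ t) ≤ u
  have h1t : 0 ≤ 1 - t := by linarith [ht.2]
  calc (1 - u) * dist a (γ t) ≤ (1 - u) * ((1 - t) * dist a x + t * dist a y) := by
        have : 0 ≤ 1 - u := by linarith
        gcongr
    _ = (1 - t) * ((1 - u) * dist a x) + t * ((1 - u) * dist a y) := by ring
    _ ≤ (1 - t) * u + t * u := by
        have := ht.1
        gcongr
    _ = u := by ring

lemma move_toward {X : Type*} [MetricSpace X] (hX : IsCAT0Space X) (a x : X) {c : ℝ}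
    (h0 : 0 ≤ c) (h1 : c ≤ 1) : ∃ y, dist a y = c * dist a x ∧ dist x y = (1 - c) * dist a x := by
  obtain ⟨γ, e0, e1, hg⟩ := hX.1 a x
  refine ⟨γ c, ?_, ?_⟩
  · have := hg 0 (by simp) c ⟨h0, h1⟩
    rw [e0, zero_sub, abs_neg, abs_of_nonneg h0] at this
    exact this
  · have := hg 1 (by simp) c ⟨h0, h1⟩
    rw [e1, abs_of_nonneg (by linarith)] at this
    exact this

lemma trunc_approx {X : Type*} [MetricSpace X] (hX : IsCAT0Space X) (a : X) {u v t : ℝ}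
    (hv0 : 0 ≤ v) (ht0 : 0 < t) (ht1 : t ≤ 1) (hu0 : 0 ≤ u)
    (huv : |u - v| ≤ t ^ 4 / 32) (x : X)
    (hx : x ∈ truncSet a u) (hD : dist a x ≤ t⁻¹) : ∃ y ∈ truncSet a v, dist x y ≤ t / 2 := by
  by_cases hsm : dist a x ≤ t / 2
  · exact ⟨a, truncSet_base a hv0, by rwa [dist_comm]⟩
  push Not at hsm
  have hx' : (1 - u) * dist a x ≤ u := hx
  set D := dist a x with hDd
  have hDt : D * t ≤ 1 := by
    calc D * t ≤ t⁻¹ * t := by gcongr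
      _ = 1 := inv_mul_cancel₀ ht0.ne'
  have hu4 : t / 4 ≤ u := by
    by_contra hlt
    push Not at hlt
    nlinarith
  have hab := abs_le.1 huv
  obtain ⟨y, hy1, hy2⟩ := move_toward hX a x (c := 1 - t ^ 2 / 2) (by nlinarith) (by nlinarith)
  rw [← hDd] at hy1 hy2
  refine ⟨y, ?_, ?_⟩
  · change (1 - v) * dist a y ≤ v
    rw [hy1]
    set ε := t ^ 4 / 32 with hε
    have hε0 : 0 < ε := by positivity
    have e1 : (1 - v) * D ≤ v + ε * (1 + D) := by nlinarith
    have e2 : ε * (1 + D) ≤ t ^ 3 / 16 := by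
      have : ε * D ≤ t ^ 3 / 32 := by
        calc ε * D = t ^ 3 / 32 * (D * t) := by rw [hε]; ring
          _ ≤ t ^ 3 / 32 * 1 := by gcongr
          _ = _ := by ring
      have : ε ≤ t ^ 3 / 32 := by
        rw [hε]
        have : t ^ 4 ≤ t ^ 3 := pow_le_pow_of_le_one ht0.le ht1 (by norm_num)
        linarith
      linarith
    have e3 : t / 8 ≤ v := by
      have : t ^ 4 ≤ t ^ 1 := pow_le_pow_of_le_one ht0.le ht1 (by norm_num)
      rw [pow_one] at this
      linarith
    have h1 : 0 ≤ 1 - t ^ 2 / 2 := by nlinarith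
    calc (1 - v) * ((1 - t ^ 2 / 2) * D) = (1 - t ^ 2 / 2) * ((1 - v) * D) := by ring
      _ ≤ (1 - t ^ 2 / 2) * (v + t ^ 3 / 16) := by gcongr; linarith
      _ ≤ v := by
        have : t ^ 2 * (t / 8) ≤ t ^ 2 * v := by gcongr
        have : 0 ≤ t ^ 2 * t ^ 3 := by positivity
        nlinarith
  · rw [hy2]
    nlinarith

/-- The truncated pointed space. -/
noncomputable def truncSpace (p : PointedProperMetricSpace) (u : unitInterval) :
    PointedProperMetricSpace :=
  haveI : ProperSpace (truncSet p.pt (u : ℝ)) :=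
    ProperSpace.of_isClosed (truncSet_closed p.pt (u : ℝ))
  { carrier := truncSet p.pt (u : ℝ), pt := ⟨p.pt, truncSet_base _ u.2.1⟩ }

lemma truncSpace_cat {p : PointedProperMetricSpace} (hp : IsCAT0Space p.carrier)
    (u : unitInterval) : IsCAT0Space (truncSpace p u).carrier :=
  (truncSet_cat hp p.pt u.2.2).isCAT0

lemma truncSpace_dist {p : PointedProperMetricSpace} (hp : IsCAT0Space p.carrier)
    (u v : unitInterval) {t : ℝ} (ht0 : 0 < t) (ht1 : t ≤ 1)
    (huv : |(u : ℝ) - v| ≤ t ^ 4 / 32) : pghDist (truncSpace p u) (truncSpace p v) ≤ t := by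
  refine pghDist_le_of_embed (W := p.carrier) (truncSpace p u) (truncSpace p v)
    (fun x => Subtype.val (p := fun x => x ∈ truncSet p.pt (u : ℝ)) x)
    (fun x => Subtype.val (p := fun x => x ∈ truncSet p.pt (v : ℝ)) x)
    isometry_subtype_coe isometry_subtype_coe rfl (s := t / 2) (by linarith) (by linarith) ?_ ?_
  · rintro ⟨x, hx⟩ hD
    obtain ⟨y, hy, hxy⟩ := trunc_approx hp p.pt v.2.1 ht0 ht1 u.2.1 huv x hx hD
    exact ⟨⟨y, hy⟩, hxy⟩
  · rintro ⟨x, hx⟩ hD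
    rw [abs_sub_comm] at huv
    obtain ⟨y, hy, hxy⟩ := trunc_approx hp p.pt u.2.1 ht0 ht1 v.2.1 huv x hx hD
    exact ⟨⟨y, hy⟩, by rw [dist_comm]; exact hxy⟩

lemma truncSpace_continuous {p : PointedProperMetricSpace} (hp : IsCAT0Space p.carrier) :
    Continuous (truncSpace p) := by
  refine pgh_continuous _ fun u ε hε => ?_
  refine ⟨(min (ε / 2) 1) ^ 4 / 32, by positivity, fun v hv => ?_⟩
  have := truncSpace_dist hp u v (t := min (ε / 2) 1) (by positivity) (min_le_right _ _)
    (by rw [abs_sub_comm]; exact hv.le)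
  have h2 := min_le_left (ε / 2) 1
  linarith

lemma truncSpace_one (p : PointedProperMetricSpace) : truncSpace p 1 ≈ p := by
  refine ⟨IsometryEquiv.mk' (fun x => Subtype.val (p := fun x => x ∈ truncSet p.pt ((1 : unitInterval) : ℝ)) x)
    (fun x => ⟨x, by simp [truncSet]⟩) (fun x => rfl) isometry_subtype_coe, rfl⟩

lemma truncSpace_zero (p q : PointedProperMetricSpace) : truncSpace p 0 ≈ truncSpace q 0 := by
  have key : ∀ (p : PointedProperMetricSpace) (x : (truncSpace p 0).carrier),
      x = (truncSpace p 0).pt := by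
    rintro p ⟨x, hx⟩
    apply Subtype.ext
    have : (1 - ((0 : unitInterval) : ℝ)) * dist p.pt x ≤ ((0 : unitInterval) : ℝ) := hx
    have h2 : dist p.pt x ≤ 0 := by simpa using this
    exact (dist_le_zero.1 h2).symm
  refine ⟨IsometryEquiv.mk' (fun _ => (truncSpace q 0).pt) (fun _ => (truncSpace p 0).pt)
    (fun x => (key q x).symm) ?_, rfl⟩
  refine Isometry.of_dist_eq fun x y => ?_
  rw [key p x, key p y, dist_self, dist_self]

lemma mem_PGHCat0 (p : PointedProperMetricSpace) :
    (Quotient.mk pointedIsometrySetoid p : PGHSpace) ∈ PGHCat0 ↔ IsCAT0Space p.carrier := by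
  obtain ⟨e, -⟩ : Quotient.out (Quotient.mk pointedIsometrySetoid p) ≈ p := Quotient.mk_out p
  exact ⟨fun h => IsCAT0Space.of_isometryEquiv h e, fun h => IsCAT0Space.of_isometryEquiv h e.symm⟩

/-- The class of a CAT(0) space as a point of the subspace. -/
def catMk (p : PointedProperMetricSpace) (hp : IsCAT0Space p.carrier) : ↥PGHCat0 :=
  ⟨Quotient.mk pointedIsometrySetoid p, (mem_PGHCat0 p).2 hp⟩

lemma catMk_continuous {T : Type*} [TopologicalSpace T] (F : T → PointedProperMetricSpace)
    (hF : Continuous F) (hc : ∀ x, IsCAT0Space (F x).carrier) :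
    Continuous (fun x => catMk (F x) (hc x)) := by
  refine Continuous.subtype_mk ?_ _
  exact continuous_quotient_mk'.comp hF

lemma catMk_surj (x : ↥PGHCat0) : ∃ p hp, x = catMk p hp := by
  obtain ⟨x, hx⟩ := x
  induction x using Quotient.inductionOn with
  | h p => exact ⟨p, (mem_PGHCat0 p).1 hx, rfl⟩

/-- The one-point space. -/
def onePt : PointedProperMetricSpace := { carrier := PUnit, pt := PUnit.unit }

theorem pghCat0_pathConnected : PathConnectedSpace ↥PGHCat0 := by
  have hone : IsCAT0Space onePt.carrier := by
    have hd : ∀ x y : onePt.carrier, dist x y = 0 := fun x y => by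
      have : x = y := Subsingleton.elim (α := PUnit) x y
      rw [this, dist_self]
    refine ⟨fun x y => ⟨fun _ => x, rfl, Subsingleton.elim (α := PUnit) _ _, ?_⟩, ?_⟩
    · intros; simp [hd]
    · intros; simp [hd]
  have key : ∀ p (hp : IsCAT0Space p.carrier), Joined
      (catMk (truncSpace onePt 0) (truncSpace_cat hone 0)) (catMk p hp) := by
    intro p hp
    refine ⟨⟨⟨fun u => catMk (truncSpace p u) (truncSpace_cat hp u),
      catMk_continuous _ (truncSpace_continuous hp) _⟩, ?_, ?_⟩⟩
    · exact Subtype.ext (Quotient.sound (truncSpace_zero p onePt))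
    · exact Subtype.ext (Quotient.sound (truncSpace_one p))
  refine ⟨⟨catMk onePt hone⟩, fun x y => ?_⟩
  obtain ⟨p, hp, rfl⟩ := catMk_surj x
  obtain ⟨q, hq, rfl⟩ := catMk_surj y
  exact (key p hp).symm.trans (key q hq)



/-- A space with hairs attached at the point `q`. -/
structure HairSys (Y : Type) [MetricSpace Y] (q : Y) (N : ℕ) where
  W : Type
  [met : MetricSpace W]
  ι : Y → W
  κ : Fin N → ℝ → W
  hι : ∀ y y', dist (ι y) (ι y') = dist y y'
  hικ : ∀ y i s, dist (ι y) (κ i s) = dist y q + |s|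
  hκ : ∀ i s s', dist (κ i s) (κ i s') = |s - s'|
  hκne : ∀ i j s s', i ≠ j → dist (κ i s) (κ j s') = |s| + |s'|

attribute [instance] HairSys.met

noncomputable def hairSys (Y : Type) [MetricSpace Y] (q : Y) (N : ℕ) : HairSys Y q N where
  W := WithLp 1 (Y × PiLp 1 (fun _ : Fin N => ℝ))
  ι y := WithLp.toLp 1 (y, 0)
  κ i s := WithLp.toLp 1 (q, WithLp.toLp 1 (Pi.single i s))
  hι y y' := by
    rw [WithLp.prod_dist_eq_add (by norm_num)]
    simp
  hικ y i s := by
    rw [WithLp.prod_dist_eq_add (by norm_num)]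
    simp only [ENNReal.toReal_one, Real.rpow_one, div_one, PiLp.dist_eq_of_L1]
    congr 1
    rw [Finset.sum_eq_single i]
    · simp
    · intro j _ hj; simp [hj]
    · simp
  hκ i s s' := by
    rw [WithLp.prod_dist_eq_add (by norm_num)]
    simp only [ENNReal.toReal_one, Real.rpow_one, div_one, PiLp.dist_eq_of_L1]
    rw [Finset.sum_eq_single i]
    · simp [Real.dist_eq]
    · intro j _ hj; simp [hj]
    · simp
  hκne i j s s' hij := by
    rw [WithLp.prod_dist_eq_add (by norm_num)]
    simp only [ENNReal.toReal_one, Real.rpow_one, div_one, PiLp.dist_eq_of_L1]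
    rw [← Finset.sum_subset (Finset.subset_univ {i, j}), Finset.sum_pair hij]
    · simp [hij, hij.symm, Real.dist_eq]
    · intro k _ hk
      simp only [Finset.mem_insert, Finset.mem_singleton, not_or] at hk
      simp [hk.1, hk.2]

namespace HairSys
variable {Y : Type} [MetricSpace Y] {q : Y} {N : ℕ} (H : HairSys Y q N)

def seg (h : Fin N → ℝ) (i : Fin N) : Set H.W := H.κ i '' Icc 0 (h i)

def hairs (h : Fin N → ℝ) : Set H.W := range H.ι ∪ ⋃ i, H.seg h i

lemma κ_zero (i : Fin N) : H.κ i 0 = H.ι q := by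
  rw [eq_comm, ← dist_eq_zero, H.hικ]; simp

lemma ι_isom : Isometry H.ι := Isometry.of_dist_eq H.hι

lemma κ_isom (i : Fin N) : Isometry (H.κ i) := Isometry.of_dist_eq fun s s' => by
  rw [H.hκ, Real.dist_eq]

lemma hairs_compact [CompactSpace Y] (h : Fin N → ℝ) : IsCompact (H.hairs h) :=
  (isCompact_range H.ι_isom.continuous).union
    (isCompact_iUnion fun i => isCompact_Icc.image (H.κ_isom i).continuous)

lemma hairs_cat (hY : IsCAT0Space Y) {h : Fin N → ℝ} (hh : ∀ i, 0 ≤ h i) : CatSet (H.hairs h) := by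
  classical
  have key : ∀ s : Finset (Fin N), CatSet (range H.ι ∪ ⋃ i ∈ s, H.seg h i) := by
    intro s
    induction s using Finset.induction_on with
    | empty => simpa using hY.catSet_range _ H.ι_isom
    | insert i s his ih =>
      have e : (range H.ι ∪ ⋃ j ∈ insert i s, H.seg h j) =
          (range H.ι ∪ ⋃ j ∈ s, H.seg h j) ∪ H.seg h i := by
        rw [Finset.set_biUnion_insert]
        ext x; simp only [mem_union]; tauto
      rw [e]
      refine CatSet.glue (o := H.ι q) (Or.inl ⟨q, rfl⟩) ⟨0, by simp [hh i], H.κ_zero i⟩ ?_ ih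
        (catSet_segment _ _ (H.hκ i))
      rintro x (⟨y, rfl⟩ | hx) _ ⟨s', hs', rfl⟩
      · rw [H.hικ, H.hικ, H.hι]; simp
      · simp only [mem_iUnion] at hx
        obtain ⟨j, hj, s, hs, rfl⟩ := hx
        have hij : j ≠ i := by rintro rfl; exact his hj
        rw [H.hκne _ _ _ _ hij, dist_comm, H.hικ, H.hικ]; simp
  have := key Finset.univ
  simpa [hairs] using this

/-- The haired pointed space. -/
noncomputable def space [CompactSpace Y] (a : Y) (h : Fin N → ℝ) : PointedProperMetricSpace :=
  haveI : CompactSpace (H.hairs h) := isCompact_iff_compactSpace.1 (H.hairs_compact h)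
  { carrier := H.hairs h, pt := ⟨H.ι a, Or.inl ⟨a, rfl⟩⟩ }

lemma space_cat [CompactSpace Y] (a : Y) (hY : IsCAT0Space Y) {h : Fin N → ℝ}
    (hh : ∀ i, 0 ≤ h i) : IsCAT0Space (H.space a h).carrier := (H.hairs_cat hY hh).isCAT0

lemma approx {h h' : Fin N → ℝ} (hh' : ∀ i, 0 ≤ h' i) {s : ℝ} (hs : ∀ i, |h i - h' i| ≤ s)
    (hs0 : 0 ≤ s) (x : H.W) (hx : x ∈ H.hairs h) : ∃ y ∈ H.hairs h', dist x y ≤ s := by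
  rcases hx with hx | hx
  · exact ⟨x, Or.inl hx, by simpa using hs0⟩
  · obtain ⟨i, r, hr, rfl⟩ := mem_iUnion.1 hx
    refine ⟨H.κ i (min r (h' i)), Or.inr (mem_iUnion.2 ⟨i, _, ⟨le_min hr.1 (hh' i), min_le_right _ _⟩, rfl⟩), ?_⟩
    rw [H.hκ]
    have := abs_le.1 (hs i)
    rcases le_total r (h' i) with hl | hl
    · rw [min_eq_left hl]; simpa using hs0
    · rw [min_eq_right hl, abs_of_nonneg (by linarith)]
      linarith [hr.2]

lemma space_dist [CompactSpace Y] (a : Y) {h h' : Fin N → ℝ} (hh : ∀ i, 0 ≤ h i)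
    (hh' : ∀ i, 0 ≤ h' i) {s t : ℝ} (hs : ∀ i, |h i - h' i| ≤ s)
    (hs0 : 0 ≤ s) (hst : s < t) : pghDist (H.space a h) (H.space a h') ≤ t := by
  refine pghDist_le_of_embed (W := H.W) (H.space a h) (H.space a h')
    (fun x => Subtype.val (p := fun x => x ∈ H.hairs h) x)
    (fun x => Subtype.val (p := fun x => x ∈ H.hairs h') x)
    isometry_subtype_coe isometry_subtype_coe rfl hs0 hst ?_ ?_
  · rintro ⟨x, hx⟩ -
    obtain ⟨y, hy, hxy⟩ := H.approx hh' hs hs0 x hx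
    exact ⟨⟨y, hy⟩, hxy⟩
  · rintro ⟨x, hx⟩ -
    obtain ⟨y, hy, hxy⟩ := H.approx hh (fun i => by rw [abs_sub_comm]; exact hs i) hs0 x hx
    exact ⟨⟨y, hy⟩, by rw [dist_comm]; exact hxy⟩

lemma space_base [CompactSpace Y] (a : Y) : 
    pghDist ⟨Y, a⟩ (H.space a 0) = 0 := by
  refine pghDist_eq_zero_of_equiv ?_
  have e : H.hairs 0 = range H.ι := by
    refine union_eq_left.2 (iUnion_subset fun i => ?_)
    rintro _ ⟨s, hs, rfl⟩
    have : s = 0 := by simpa using hs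
    exact ⟨q, by rw [this, H.κ_zero]⟩
  refine ⟨IsometryEquiv.mk (Equiv.ofBijective (fun y => (⟨H.ι y, Or.inl ⟨y, rfl⟩⟩ : H.hairs 0)) ⟨?_, ?_⟩) ?_, rfl⟩
  · intro x y hxy
    exact H.ι_isom.injective (Subtype.ext_iff.1 hxy)
  · rintro ⟨x, hx⟩
    obtain ⟨y, rfl⟩ := e ▸ hx
    exact ⟨y, rfl⟩
  · exact fun x y => H.ι_isom x y

/-- Separation. -/
lemma sep [CompactSpace Y] (a : Y) (r0 η δ : ℝ) (hq : ∀ y, dist a y ≤ r0) (hqa : dist a q = r0)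
    (hη : 0 < η) (hδ : 0 < δ) (hδ2 : δ ≤ 1 / 2) (hδη : δ ≤ η / 4) (hδr : δ * (r0 + 5 * N * η) ≤ 1)
    (x y : Fin N → ℝ) (hx : ∀ i, x i ∈ Icc (0:ℝ) 1) (hy : ∀ i, y i ∈ Icc (0:ℝ) 1)
    (i : Fin N) (hxi : x i = 0) (hyi : y i = 1) :
    δ ≤ pghDist (H.space a (fun j => η * (3 * N + 2 * (j : ℕ) + x j)))
      (H.space a (fun j => η * (3 * N + 2 * (j : ℕ) + y j))) := by
  set hX : Fin N → ℝ := fun j => η * (3 * N + 2 * (j : ℕ) + x j) with hhX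
  set hY : Fin N → ℝ := fun j => η * (3 * N + 2 * (j : ℕ) + y j) with hhY
  by_contra hlt
  push Not at hlt
  obtain ⟨t, ht0, htδ, g, hg⟩ := exists_adm_of_lt hδ2 hlt
  have hg' : IsAdmissiblePair (X := H.hairs hX) (Y := H.hairs hY) ⟨H.ι a, Or.inl ⟨a, rfl⟩⟩
    ⟨H.ι a, Or.inl ⟨a, rfl⟩⟩ t g := hg
  clear hg
  change H.hairs hX ⊕ H.hairs hY → H.hairs hX ⊕ H.hairs hY → ℝ at g
  obtain ⟨g1, g2, g3, g4, g5, g6, g7, g8⟩ := hg'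
  have hN : (1:ℝ) ≤ N := by exact_mod_cast i.pos
  have hjN : ∀ j : Fin N, ((j : ℕ) : ℝ) + 1 ≤ N := fun j => by exact_mod_cast j.2
  have hYpos : ∀ j, 0 < hY j := fun j => by
    have := (hy j).1
    simp only [hhY]; positivity
  have hY3 : ∀ j, 3 * N * η ≤ hY j := fun j => by
    have := (hy j).1
    have h2 : (0:ℝ) ≤ (j : ℕ) := by positivity
    simp only [hhY]; nlinarith
  -- the hair ends
  let z : Fin N → H.hairs hY := fun j =>
    ⟨H.κ j (hY j), Or.inr (mem_iUnion.2 ⟨j, _, ⟨(hYpos j).le, le_rfl⟩, rfl⟩)⟩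
  let za : H.hairs hY := ⟨H.ι a, Or.inl ⟨a, rfl⟩⟩
  let xa : H.hairs hX := ⟨H.ι a, Or.inl ⟨a, rfl⟩⟩
  have hza : ∀ j, dist za (z j) = r0 + hY j := fun j => by
    change dist (H.ι a) (H.κ j (hY j)) = _
    rw [H.hικ, hqa, abs_of_pos (hYpos j)]
  have hzz : ∀ j k, j ≠ k → dist (z j) (z k) = hY j + hY k := fun j k hjk => by
    change dist (H.κ j (hY j)) (H.κ k (hY k)) = _
    rw [H.hκne _ _ _ _ hjk, abs_of_pos (hYpos j), abs_of_pos (hYpos k)]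
  have hr0 : 0 ≤ r0 := hqa ▸ dist_nonneg
  have hw : ∀ j, ∃ w : H.hairs hX, g (Sum.inr (z j)) (Sum.inl w) < t := by
    intro j
    refine g8 (Sum.inr (z j)) ?_
    refine (g5 za (z j)).le.trans ?_
    rw [hza, le_inv_comm₀ (by linarith [hYpos j]) ht0, ]
    have h5 : r0 + hY j ≤ r0 + 5 * N * η := by
      have := (hy j).2
      have := hjN j
      simp only [hhY]; nlinarith
    rw [← one_div, le_div_iff₀ (by linarith [hYpos j])]
    calc t * (r0 + hY j) ≤ δ * (r0 + 5 * N * η) := by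
          have := hYpos j
          gcongr
      _ ≤ 1 := hδr
  choose w hw using hw
  have hwd : ∀ j, r0 + hY j - 2 * δ < dist xa (w j) := by
    intro j
    have e1 := g3 (Sum.inr za) (Sum.inl xa) (Sum.inr (z j))
    have e2 := g3 (Sum.inl xa) (Sum.inl (w j)) (Sum.inr (z j))
    have e3 := g5 za (z j)
    have e4 := g4 xa (w j)
    have e5 := hw j
    rw [g2] at e5
    have e6 : g (Sum.inl xa) (Sum.inr za) < t := g6
    rw [g2] at e6
    have e7 := hza j
    linarith
  have hww : ∀ j k, j ≠ k → hY j + hY k - 2 * δ < dist (w j) (w k) := by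
    intro j k hjk
    have e1 := g3 (Sum.inr (z j)) (Sum.inl (w j)) (Sum.inr (z k))
    have e2 := g3 (Sum.inl (w j)) (Sum.inl (w k)) (Sum.inr (z k))
    have e3 := g5 (z j) (z k)
    have e4 := g4 (w j) (w k)
    have e5 := hw j
    have e6 := hw k
    rw [g2] at e6
    have e7 := hzz j k hjk
    linarith
  -- each w j with j ≥ i is on a hair of index > i
  have hloc : ∀ j : Fin N, i ≤ j → ∃ k : Fin N, i < k ∧ ∃ s, hY j - 2 * δ < s ∧ s ≤ hX k ∧
      (w j : H.W) = H.κ k s := by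
    intro j hij
    have hij' : ((i : ℕ) : ℝ) ≤ (j : ℕ) := by exact_mod_cast hij
    have hji : η * (3 * N + 2 * (i : ℕ) + 1) ≤ hY j := by
      rcases hij.eq_or_lt with rfl | hlt
      · simp [hhY, hyi]
      · have : ((i : ℕ) : ℝ) + 1 ≤ (j : ℕ) := by exact_mod_cast hlt
        have := (hy j).1
        simp only [hhY]
        gcongr ?_ * ?_
        linarith
    have hd := hwd j
    change _ < dist (H.ι a) (w j : H.W) at hd
    rcases (w j).2 with ⟨v, hv⟩ | hv
    · exfalso
      rw [← hv, H.hι] at hd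
      have := hq v
      have := hY3 j
      nlinarith
    · obtain ⟨k, s, hs, hks⟩ := mem_iUnion.1 hv
      rw [← hks, H.hικ, hqa, abs_of_nonneg hs.1] at hd
      refine ⟨k, ?_, s, by linarith, hs.2, hks.symm⟩
      by_contra hki
      push Not at hki
      have hle : hX k ≤ η * (3 * N + 2 * (i : ℕ)) := by
        rcases hki.eq_or_lt with rfl | hlt
        · simp [hhX, hxi]
        · have : ((k : ℕ) : ℝ) + 1 ≤ (i : ℕ) := by exact_mod_cast hlt
          have := (hx k).2
          simp only [hhX]
          gcongr ?_ * ?_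
          linarith
      have := hs.2
      nlinarith
  choose! k hk s hs1 hs2 hs3 using hloc
  have hinj : ∀ j ∈ Finset.Ici i, ∀ j' ∈ Finset.Ici i, k j = k j' → j = j' := by
    intro j hj j' hj' hkk
    rw [Finset.mem_Ici] at hj hj'
    by_contra hne
    have h1 := hww j j' hne
    change _ < dist (w j : H.W) (w j' : H.W) at h1
    rw [hs3 j hj, hs3 j' hj', hkk, H.hκ] at h1
    have a1 := hs1 j hj
    have a2 := hs1 j' hj'
    have a3 := hs2 j hj
    have a4 := hs2 j' hj'
    rw [hkk] at a3
    have b1 := hY3 j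
    have b2 := hY3 j'
    have b3 : hX (k j') ≤ 5 * N * η := by
      have := (hx (k j')).2
      have := hjN (k j')
      simp only [hhX]; nlinarith
    have hNη : η ≤ N * η := by nlinarith
    have : |s j - s j'| ≤ 5 * N * η - (3 * N * η - 2 * δ) :=
      abs_le.2 ⟨by linarith, by linarith⟩
    linarith
  have hcard := Finset.card_le_card_of_injOn (s := Finset.Ici i) (t := Finset.Ioi i) k
    (fun j hj => by
      have := hk j (by simpa using hj)
      simpa using this) (fun j hj j' hj' => hinj j (by simpa using hj) j' (by simpa using hj'))
  rw [Fin.card_Ici, Fin.card_Ioi] at hcard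
  have := i.2
  omega

end HairSys



lemma hair_family (Y : Type) [MetricSpace Y] [CompactSpace Y] (a : Y) (hY : IsCAT0Space Y)
    (N : ℕ) (hN : 0 < N) (ε : ℝ) (hε : 0 < ε) :
    ∃ F : (Fin N → ℝ) → PointedProperMetricSpace, Continuous F ∧
      (∀ x, IsCAT0Space (F x).carrier) ∧ (∀ x, pghDist ⟨Y, a⟩ (F x) < ε) ∧
      ∃ δ > 0, ∀ x ∈ Icc (0 : Fin N → ℝ) 1, ∀ y ∈ Icc (0 : Fin N → ℝ) 1, ∀ i,
        x i = 0 → y i = 1 → δ ≤ pghDist (F x) (F y) := by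
  obtain ⟨q, -, hq⟩ := isCompact_univ.exists_isMaxOn (s := (univ : Set Y)) ⟨a, trivial⟩
    (f := fun y => dist a y) (by fun_prop)
  have hN' : (0:ℝ) < N := by exact_mod_cast hN
  let H := hairSys Y q N
  set r0 := dist a q with hr0
  have hr0' : 0 ≤ r0 := dist_nonneg
  set η : ℝ := ε / (20 * N) with hηd
  have hη : 0 < η := by positivity
  have hηN : 5 * N * η = ε / 4 := by rw [hηd]; field_simp; norm_num
  let cl : ℝ → ℝ := fun s => max 0 (min 1 s)
  have hcl : ∀ s, cl s ∈ Icc (0:ℝ) 1 := fun s => ⟨le_max_left _ _, max_le zero_le_one (min_le_left _ _)⟩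
  have hcl1 : ∀ s ∈ Icc (0:ℝ) 1, cl s = s := fun s hs => by
    simp only [cl]; rw [min_eq_right hs.2, max_eq_right hs.1]
  have hcld : ∀ s s', |cl s - cl s'| ≤ |s - s'| := fun s s' => by
    simp only [cl]
    refine (abs_max_sub_max_le_max _ _ _ _).trans ?_
    refine max_le (by simp) ?_
    refine (abs_min_sub_min_le_max _ _ _ _).trans ?_
    exact max_le (by simp) le_rfl
  let hh : (Fin N → ℝ) → Fin N → ℝ := fun x j => η * (3 * N + 2 * (j : ℕ) + cl (x j))
  have hh0 : ∀ x j, 0 ≤ hh x j := fun x j => by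
    have := (hcl (x j)).1
    simp only [hh]; positivity
  have hh5 : ∀ x j, hh x j ≤ 5 * N * η := fun x j => by
    have := (hcl (x j)).2
    have : ((j : ℕ) : ℝ) + 1 ≤ N := by exact_mod_cast j.2
    simp only [hh]; nlinarith
  refine ⟨fun x => H.space a (hh x), ?_, fun x => H.space_cat a hY (hh0 x), ?_, ?_⟩
  · refine pgh_continuous _ fun x e he => ⟨e / (4 * η), by positivity, fun y hy => ?_⟩
    have := H.space_dist a (hh0 x) (hh0 y) (s := e / 4) (t := e / 2) ?_ (by positivity) (by linarith)
    · linarith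
    · intro i
      have h1 : |cl (x i) - cl (y i)| ≤ e / (4 * η) := by
        refine (hcld _ _).trans ?_
        rw [abs_sub_comm, ← Real.dist_eq]
        exact (dist_le_pi_dist y x i).trans hy.le
      have h2 : hh x i - hh y i = η * (cl (x i) - cl (y i)) := by simp only [hh]; ring
      rw [h2, abs_mul, abs_of_pos hη]
      calc η * |cl (x i) - cl (y i)| ≤ η * (e / (4 * η)) := by gcongr
        _ = e / 4 := by field_simp
  · intro x
    have h1 := pghDist_triangle ⟨Y, a⟩ (H.space a 0) (H.space a (hh x))
    rw [H.space_base a] at h1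
    have h2 := H.space_dist a (h := 0) (h' := hh x) (fun _ => le_rfl) (hh0 x) (s := ε / 4)
      (t := ε / 2) ?_ (by positivity) (by linarith)
    · linarith
    · intro i
      rw [Pi.zero_apply, zero_sub, abs_neg, abs_of_nonneg (hh0 x i), ← hηN]
      exact hh5 x i
  · refine ⟨min (1 / 2) (min (η / 4) (1 / (r0 + 5 * N * η))), by positivity, ?_⟩
    intro x hx y hy i hxi hyi
    have hx' : ∀ j, x j ∈ Icc (0:ℝ) 1 := fun j => ⟨hx.1 j, hx.2 j⟩
    have hy' : ∀ j, y j ∈ Icc (0:ℝ) 1 := fun j => ⟨hy.1 j, hy.2 j⟩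
    have ex : hh x = fun j : Fin N => η * (3 * N + 2 * (j : ℕ) + x j) := by
      funext j; simp only [hh]; rw [hcl1 _ (hx' j)]
    have ey : hh y = fun j : Fin N => η * (3 * N + 2 * (j : ℕ) + y j) := by
      funext j; simp only [hh]; rw [hcl1 _ (hy' j)]
    change _ ≤ pghDist (H.space a (hh x)) (H.space a (hh y))
    rw [ex, ey]
    refine H.sep a r0 η _ (fun v => hq (mem_univ v)) rfl hη (by positivity) (min_le_left _ _)
      ((min_le_right _ _).trans (min_le_left _ _)) ?_ x y hx' hy' i hxi hyi
    have hp : 0 < r0 + 5 * N * η := by positivity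
    rw [← le_div_iff₀ hp]
    exact (min_le_right _ _).trans (min_le_right _ _)

lemma exists_compact_near {U : Set ↥PGHCat0} (hU : IsOpen U) (hne : U.Nonempty) :
    ∃ (p : PointedProperMetricSpace) (hp : IsCAT0Space p.carrier), CompactSpace p.carrier ∧
      catMk p hp ∈ U := by
  obtain ⟨x, hx⟩ := hne
  obtain ⟨p, hp, rfl⟩ := catMk_surj x
  have hc : Continuous (fun u => catMk (truncSpace p u) (truncSpace_cat hp u)) :=
    catMk_continuous _ (truncSpace_continuous hp) _
  have h1 : catMk (truncSpace p 1) (truncSpace_cat hp 1) = catMk p hp :=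
    Subtype.ext (Quotient.sound (truncSpace_one p))
  have hO := hU.preimage hc
  obtain ⟨ε, hε, hb⟩ := Metric.isOpen_iff.1 hO 1 (by rw [mem_preimage, h1]; exact hx)
  set v : ℝ := 1 - min (ε / 2) (1 / 2) with hv
  have hm0 : 0 < min (ε / 2) (1 / 2) := by positivity
  have hm1 : min (ε / 2) (1 / 2) ≤ 1 / 2 := min_le_right _ _
  have hm2 : min (ε / 2) (1 / 2) ≤ ε / 2 := min_le_left _ _
  let u : unitInterval := ⟨v, by linarith, by linarith⟩
  refine ⟨truncSpace p u, truncSpace_cat hp u, ?_, hb ?_⟩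
  · change CompactSpace (truncSet p.pt v)
    rw [← isCompact_iff_compactSpace]
    refine Metric.isCompact_of_isClosed_isBounded (truncSet_closed _ _) ?_
    refine Metric.isBounded_closedBall.subset (t := Metric.closedBall p.pt (v / (1 - v))) ?_
    intro y hy
    have : (1 - v) * dist p.pt y ≤ v := hy
    rw [Metric.mem_closedBall, dist_comm, le_div_iff₀ (by linarith)]
    linarith
  · rw [Metric.mem_ball, Subtype.dist_eq, Real.dist_eq]
    change |v - 1| < ε
    rw [abs_lt]
    constructor <;> linarith

theorem pghCat0_dim (U : Set ↥PGHCat0) (hU : IsOpen U) (hne : U.Nonempty) (n : ℕ)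
    (hdim : CovDimLE ↥U n) : False := by
  obtain ⟨p, hp, hcomp, hpU⟩ := exists_compact_near hU hne
  obtain ⟨O, hO, rfl⟩ := isOpen_induced_iff.1 hU
  obtain ⟨ε, hε, hb⟩ := pgh_exists_ball (O := (Quotient.mk pointedIsometrySetoid) ⁻¹' O)
    (hO.preimage continuous_quotient_mk') (p := p) hpU
  obtain ⟨F, hF, hcat, hnear, δ, hδ, hsep⟩ :=
    hair_family p.carrier p.pt hp (n + 1) n.succ_pos ε hε
  let f : (Fin (n + 1) → ℝ) → ↥((fun x : ↥PGHCat0 => (x : PGHSpace)) ⁻¹' O) :=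
    fun x => ⟨catMk (F x) (hcat x), hb _ (hnear x)⟩
  have hf : Continuous f := (catMk_continuous F hF hcat).subtype_mk _
  let face : Fin (n + 1) → Type := fun i => {x : Fin (n + 1) → ℝ // x ∈ Icc 0 1 ∧ x i = 0}
  haveI : ∀ i, Nonempty (face i) := fun i => ⟨⟨0, ⟨le_rfl, zero_le_one⟩, rfl⟩⟩
  let φ : Fin (n + 1) → ↥((fun x : ↥PGHCat0 => (x : PGHSpace)) ⁻¹' O) → ℝ := fun i x =>
    pghInfQ (fun z : face i => F z.1) ((x : ↥PGHCat0) : PGHSpace)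
  refine aux_lebesgue n hdim f hf φ (fun i => ?_) δ hδ ?_ ?_
  · exact (pghInfQ_continuous _).comp (continuous_subtype_val.comp continuous_subtype_val)
  · intro x hx i hxi
    change pghInf (fun z : face i => F z.1) (F x) ≤ 0
    refine (ciInf_le (pghInf_bdd _ _) (⟨x, hx, hxi⟩ : face i)).trans ?_
    exact (pghDist_self _).le
  · intro x hx i hxi
    change δ ≤ pghInf (fun z : face i => F z.1) (F x)
    refine le_ciInf fun z => ?_
    rw [pghDist_comm]
    exact hsep _ z.2.1 x hx i z.2.2 hxi

end Helpers

/-- The set `𝒫𝒵` of all pointed proper CAT(0) metric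
spaces is path-connected as a subspace of `(𝒫ℳ, d_pGH)`, and every nonempty
open subset of `𝒫𝒵` has infinite covering dimension. -/
theorem statement10 :
    PathConnectedSpace ↥PGHCat0 ∧
    ∀ U : Set ↥PGHCat0, IsOpen U → U.Nonempty →
      ¬ ∃ n : ℕ, CovDimLE ↥U n := by
  exact ⟨pghCat0_pathConnected, fun U hU hne ⟨n, hn⟩ => pghCat0_dim U hU hne n hn⟩
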